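/- Let ν ≥ 1, let N ⊆ ℝ^ν be a compact connected smooth embedded submanifold without boundary with base point b ∈ N, let m ≥ 2, and let ℓ ∈ {1, …, m−1}. Set p = ℓ + 1 and assume that the homotopy group π_ℓ(N, b) is nontrivial. Then there exists a sequence (u_j) of smooth maps u_j : B̄^{m−1} → N with u_j = b on the sphere S^{m−2}, such that liminf_{j→∞} E^{1−1/p, p}_{B^{m−1}}(u_j) > 0 and such that for every M > 0 there is J with E^{1,p}_ext(u_j) ≥ M · E^{1−1/p, p}_{B^{m−1}}(u_j) for all j ≥ J. -/

import Mathlib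

open Metric Set MeasureTheory Filter
open scoped ENNReal Topology

noncomputable section

/-- `N ⊆ ℝ^ν` is a smooth embedded submanifold without boundary: around each of its points
there is a smooth local diffeomorphism of the ambient space flattening `N` onto a
`d`-dimensional coordinate subspace. -/
def IsSmoothSubmanifold {ν : ℕ} (N : Set (EuclideanSpace ℝ (Fin ν))) : Prop :=
  ∃ d : ℕ, ∀ x ∈ N, ∃ (U V : Set (EuclideanSpace ℝ (Fin ν)))
      (φ ψ : EuclideanSpace ℝ (Fin ν) → EuclideanSpace ℝ (Fin ν)),
    IsOpen U ∧ IsOpen V ∧ x ∈ U ∧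
    ContDiffOn ℝ (⊤ : ℕ∞) φ U ∧ ContDiffOn ℝ (⊤ : ℕ∞) ψ V ∧
    MapsTo φ U V ∧ MapsTo ψ V U ∧
    (∀ y ∈ U, ψ (φ y) = y) ∧ (∀ z ∈ V, φ (ψ z) = z) ∧
    (∀ y ∈ U, (y ∈ N ↔ ∀ i : Fin ν, d ≤ (i : ℕ) → φ y i = 0))

/-- The Gagliardo fractional energy `E^{s,p}_A(u)`. -/
def gagliardoE {l ν : ℕ} (s p : ℝ) (A : Set (EuclideanSpace ℝ (Fin l)))
    (u : EuclideanSpace ℝ (Fin l) → EuclideanSpace ℝ (Fin ν)) : ℝ≥0∞ :=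
  ∫⁻ x in A, ∫⁻ y in A, ENNReal.ofReal (‖u y - u x‖ ^ p / ‖y - x‖ ^ ((l : ℝ) + s * p))

/-- `f` is `C^1` on the closed set `A` in the sense that it is (the restriction of)
a `C^1` map on an open neighborhood of `A`. -/
def C1OnNhd {E F : Type*} [NormedAddCommGroup E] [NormedSpace ℝ E]
    [NormedAddCommGroup F] [NormedSpace ℝ F] (f : E → F) (A : Set E) : Prop :=
  ∃ V : Set E, IsOpen V ∧ A ⊆ V ∧ ContDiffOn ℝ 1 f V

/-- `f` is `C^∞` on the closed set `A` in the sense that it is (the restriction of)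
a smooth map on an open neighborhood of `A`. -/
def SmoothOnNhd {E F : Type*} [NormedAddCommGroup E] [NormedSpace ℝ E]
    [NormedAddCommGroup F] [NormedSpace ℝ F] (f : E → F) (A : Set E) : Prop :=
  ∃ V : Set E, IsOpen V ∧ A ⊆ V ∧ ContDiffOn ℝ (⊤ : ℕ∞) f V

/-- The `C^1` extension `p`-energy `E^{1,p}_ext(u)` of a map `u : B̄^l → N`:
the infimum (in `ℝ≥0∞`, so `sInf ∅ = ∞`) of `∫_{B^l × (0,1)} ‖DU‖^p` over all `C^1` maps
`U : B̄^l × [0,1] → N` with `U(·,0) = u`. -/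
def extEnergy {l ν : ℕ} (p : ℝ) (N : Set (EuclideanSpace ℝ (Fin ν)))
    (u : EuclideanSpace ℝ (Fin l) → EuclideanSpace ℝ (Fin ν)) : ℝ≥0∞ :=
  sInf { e | ∃ U : EuclideanSpace ℝ (Fin l) × ℝ → EuclideanSpace ℝ (Fin ν),
    C1OnNhd U (closedBall 0 1 ×ˢ Icc (0 : ℝ) 1) ∧
    MapsTo U (closedBall 0 1 ×ˢ Icc (0 : ℝ) 1) N ∧
    (∀ x ∈ closedBall (0 : EuclideanSpace ℝ (Fin l)) 1, U (x, 0) = u x) ∧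
    e = ∫⁻ z in ball (0 : EuclideanSpace ℝ (Fin l)) 1 ×ˢ Ioo (0 : ℝ) 1,
          ENNReal.ofReal (‖fderiv ℝ U z‖ ^ p) }

/-- `f` and `g`, mapping `B̄^l` into `N` and agreeing on `S^{l-1}`, are homotopic within `N`
relative to the sphere `S^{l-1}`. -/
def HomotopicRelSphere {l ν : ℕ} (N : Set (EuclideanSpace ℝ (Fin ν)))
    (f g : EuclideanSpace ℝ (Fin l) → EuclideanSpace ℝ (Fin ν)) : Prop :=
  ∃ H : EuclideanSpace ℝ (Fin l) × ℝ → EuclideanSpace ℝ (Fin ν),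
    ContinuousOn H (closedBall 0 1 ×ˢ Icc (0 : ℝ) 1) ∧
    MapsTo H (closedBall 0 1 ×ˢ Icc (0 : ℝ) 1) N ∧
    (∀ x ∈ closedBall (0 : EuclideanSpace ℝ (Fin l)) 1, H (x, 0) = f x ∧ H (x, 1) = g x) ∧
    (∀ x ∈ sphere (0 : EuclideanSpace ℝ (Fin l)) 1, ∀ t ∈ Icc (0 : ℝ) 1, H (x, t) = f x)

/-- The topological `p`-energy `E^{1,p}_top(u)` of `u : B̄^l → N` with `u = b` on `S^{l-1}`:
the infimum (in `ℝ≥0∞`) of `∫_{B^l} ‖Dw‖^p` over all `C^1` maps `w : B̄^l → N` with `w = b` on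
`S^{l-1}` that are homotopic to `u` relative to `S^{l-1}`. -/
def topEnergy {l ν : ℕ} (p : ℝ) (N : Set (EuclideanSpace ℝ (Fin ν)))
    (b : EuclideanSpace ℝ (Fin ν))
    (u : EuclideanSpace ℝ (Fin l) → EuclideanSpace ℝ (Fin ν)) : ℝ≥0∞ :=
  sInf { e | ∃ w : EuclideanSpace ℝ (Fin l) → EuclideanSpace ℝ (Fin ν),
    C1OnNhd w (closedBall 0 1) ∧ MapsTo w (closedBall 0 1) N ∧
    (∀ x ∈ sphere (0 : EuclideanSpace ℝ (Fin l)) 1, w x = b) ∧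
    HomotopicRelSphere N w u ∧
    e = ∫⁻ x in ball (0 : EuclideanSpace ℝ (Fin l)) 1, ENNReal.ofReal (‖fderiv ℝ w x‖ ^ p) }

/-!
Represent a nontrivial class of `π_ℓ(N, b)` by a smooth map `f : ℝ^ℓ → N` equal to `b` outside the
unit ball, and let `u_ε` be, on each `ℓ`-dimensional slice of the ball near the origin, a copy of
`f` concentrated at scale `ε` about a point `c`, cut off near the sphere.

For `sp = ℓ` the Gagliardo energy is scale invariant on slices. Hence the energy of `u_ε` stays
bounded away from `0`, and it stays bounded as well if `c` is chosen by averaging so that the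
region where `u_ε ≠ b` has measure of order `ε^ℓ`.

For the extension energy, let `V` be a `C^1` extension of `u_ε` to a slice times `[0, 1]` and let
`2ε ≤ r`. The restriction of `V` to the dome of radius about `r` over the core `c` is `b` on the
boundary and represents the class of `f` again, so it has to leave a ball about `b` of fixed radius,
since inside that ball the neighbourhood retraction onto `N` would contract it. By Morrey's
inequality with `p = ℓ + 1` this costs `∫ ‖DV‖^p ≳ 1 / r` on the dome. Integrating over the domes
`2ε < r < 1 / 8` and over all slices gives energy at least of order `log (1 / ε)`.
-/

section SmoothRetraction

open scoped ContDiff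

variable {F : Type*} [NormedAddCommGroup F] [NormedSpace ℝ F]

/-- `ρ` maps the open set `W` smoothly into `N` and fixes the points of `N` lying in `W`; here `W`
need not contain all of `N`. -/
structure IsSmoothRetractionOn (ρ : F → F) (W N : Set F) : Prop where
  isOpen : IsOpen W
  contDiffOn : ContDiffOn ℝ ∞ ρ W
  mapsTo : MapsTo ρ W N
  fixes : ∀ y ∈ W, y ∈ N → ρ y = y

namespace IsSmoothRetractionOn

variable {ρ ρ' ρ₁ ρ₂ σ : F → F} {V W W₁ W₂ N : Set F}

lemma mono (h : IsSmoothRetractionOn ρ W N) (hV : IsOpen V) (hVW : V ⊆ W) :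
    IsSmoothRetractionOn ρ V N :=
  ⟨hV, h.contDiffOn.mono hVW, h.mapsTo.mono_left hVW, fun y hy => h.fixes y (hVW hy)⟩

lemma congr (h : IsSmoothRetractionOn ρ W N) (heq : EqOn ρ' ρ W) :
    IsSmoothRetractionOn ρ' W N :=
  ⟨h.isOpen, h.contDiffOn.congr heq, h.mapsTo.congr heq.symm,
    fun y hy hyN => (heq hy).trans (h.fixes y hy hyN)⟩

lemma union (h₁ : IsSmoothRetractionOn ρ W₁ N) (h₂ : IsSmoothRetractionOn ρ W₂ N) :
    IsSmoothRetractionOn ρ (W₁ ∪ W₂) N :=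
  ⟨h₁.isOpen.union h₂.isOpen,
    h₁.contDiffOn.union_of_isOpen h₂.contDiffOn h₁.isOpen h₂.isOpen,
    h₁.mapsTo.union h₂.mapsTo, fun y hy hyN => hy.elim (h₁.fixes y · hyN) (h₂.fixes y · hyN)⟩

lemma comp (h : IsSmoothRetractionOn ρ W N) (hV : IsOpen V) (hσ : ContDiffOn ℝ ∞ σ V)
    (hfix : ∀ y ∈ V, y ∈ N → σ y = y) : IsSmoothRetractionOn (ρ ∘ σ) (V ∩ σ ⁻¹' W) N where
  isOpen := hσ.continuousOn.isOpen_inter_preimage hV h.isOpen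
  contDiffOn := h.contDiffOn.comp (hσ.mono inter_subset_left) fun _ hy => hy.2
  mapsTo := fun _ hy => h.mapsTo hy.2
  fixes := fun y hy hyN => by
    have hσy := hfix y hy.1 hyN
    rw [Function.comp_apply, hσy, h.fixes y (hσy ▸ hy.2) hyN]

lemma lineMap_eq_self (h₁ : IsSmoothRetractionOn ρ₁ W₁ N) (h₂ : IsSmoothRetractionOn ρ₂ W₂ N)
    {c : ℝ} {y : F} (hy : y ∈ W₁ ∩ W₂) (hyN : y ∈ N) :
    AffineMap.lineMap (ρ₂ y) (ρ₁ y) c = y := by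
  rw [h₁.fixes y hy.1 hyN, h₂.fixes y hy.2 hyN, AffineMap.lineMap_same_apply]

lemma blend (h₁ : IsSmoothRetractionOn ρ₁ W₁ N) (h₂ : IsSmoothRetractionOn ρ₂ W₂ N)
    {χ : F → ℝ} (hχ : ContDiff ℝ ∞ χ) :
    IsSmoothRetractionOn (ρ₁ ∘ fun y => AffineMap.lineMap (ρ₂ y) (ρ₁ y) (χ y))
      (W₁ ∩ W₂ ∩ (fun y => AffineMap.lineMap (ρ₂ y) (ρ₁ y) (χ y)) ⁻¹' W₁) N := by
  refine h₁.comp (h₁.isOpen.inter h₂.isOpen) ?_ fun y hy hyN => h₁.lineMap_eq_self h₂ hy hyN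
  simp only [AffineMap.lineMap_apply_module]
  exact ((contDiff_const.sub hχ).contDiffOn.smul (h₂.contDiffOn.mono inter_subset_right)).add
    (hχ.contDiffOn.smul (h₁.contDiffOn.mono inter_subset_left))

end IsSmoothRetractionOn

/-- Some neighbourhood of the closure of `s` carries a smooth retraction into `N`. The closure
leaves room for the cutoffs that glue two such retractions. -/
def HasSmoothRetractionNear (N s : Set F) : Prop :=
  ∃ (W : Set F) (ρ : F → F), closure s ⊆ W ∧ IsSmoothRetractionOn ρ W N

variable {N s t : Set F}

lemma HasSmoothRetractionNear.mono (h : HasSmoothRetractionNear N t) (hst : s ⊆ t) :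
    HasSmoothRetractionNear N s :=
  let ⟨W, ρ, hW, hρ⟩ := h
  ⟨W, ρ, (closure_mono hst).trans hW, hρ⟩

variable [FiniteDimensional ℝ F]

-- Interpolate from `ρ₁` near `s` to `ρ₂` away from `s` by a cutoff `χ`, and push the convex
-- combination back into `N` by `ρ₁`: where `χ` is locally constant this changes nothing.
lemma HasSmoothRetractionNear.union (hN : IsClosed N) (htN : t ⊆ N)
    (hs : HasSmoothRetractionNear N s) (ht : HasSmoothRetractionNear N t) :
    HasSmoothRetractionNear N (s ∪ t) := by
  classical
  obtain ⟨W₁, ρ₁, hsW₁, h₁⟩ := hs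
  obtain ⟨W₂, ρ₂, htW₂, h₂⟩ := ht
  obtain ⟨O', hO', hsO', hO'W₁⟩ := normal_exists_closure_subset isClosed_closure h₁.isOpen hsW₁
  obtain ⟨O, hO, hsO, hOO'⟩ := normal_exists_closure_subset isClosed_closure hO' hsO'
  obtain ⟨χ, hχ, -, hχ0, hχ1⟩ := exists_contMDiff_zero_iff_one_iff_of_isClosed
    (modelWithCornersSelf ℝ F) (n := (⊤ : ℕ∞)) hO'.isClosed_compl (isClosed_closure (s := O))
    (disjoint_compl_left_iff_subset.2 hOO')
  rw [contMDiff_iff_contDiff] at hχ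
  let σ : F → F := fun y => AffineMap.lineMap (ρ₂ y) (ρ₁ y) (χ y)
  have hO_le : O ⊆ O' := subset_closure.trans hOO'
  let A := W₂ ∩ (closure O')ᶜ
  let T := (W₁ ∩ W₂) ∩ σ ⁻¹' W₁
  let ρ := O.piecewise ρ₁ (A.piecewise ρ₂ (ρ₁ ∘ σ))
  have hρO : EqOn ρ ρ₁ O := O.piecewise_eqOn ..
  have hρA : EqOn ρ ρ₂ A := fun y hy => by
    have hyO : y ∉ O := fun h => hy.2 (subset_closure (hO_le h))
    simp only [ρ, piecewise_eq_of_notMem _ _ _ hyO, piecewise_eq_of_mem _ _ _ hy]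
  have hρT : EqOn ρ (ρ₁ ∘ σ) T := fun y hy => by
    by_cases hyO : y ∈ O
    · have hσy : σ y = ρ₁ y := by
        simp only [σ, (hχ1 y).1 (subset_closure hyO), AffineMap.lineMap_apply_one]
      rw [hρO hyO, Function.comp_apply, hσy, h₁.fixes _ (hσy ▸ hy.2) (h₁.mapsTo hy.1.1)]
    by_cases hyA : y ∈ A
    · have hσy : σ y = ρ₂ y := by
        simp only [σ, (hχ0 y).1 fun h => hyA.2 (subset_closure h), AffineMap.lineMap_apply_zero]
      rw [hρA hyA, Function.comp_apply, hσy, h₁.fixes _ (hσy ▸ hy.2) (h₂.mapsTo hy.1.2)]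
    simp only [ρ, piecewise_eq_of_notMem _ _ _ hyO, piecewise_eq_of_notMem _ _ _ hyA]
  refine ⟨O ∪ A ∪ T, ρ, ?_,
    (((h₁.mono hO (hO_le.trans (subset_closure.trans hO'W₁))).congr hρO).union
      ((h₂.mono (h₂.isOpen.inter isClosed_closure.isOpen_compl) inter_subset_left).congr
        hρA)).union ((h₁.blend h₂ hχ).congr hρT)⟩
  rw [closure_union]
  rintro x (hx | hx)
  · exact Or.inl (Or.inl (hsO hx))
  by_cases hx₁ : x ∈ W₁
  · have hx₁₂ : x ∈ W₁ ∩ W₂ := ⟨hx₁, htW₂ hx⟩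
    refine Or.inr ⟨hx₁₂, ?_⟩
    simpa only [σ, mem_preimage, h₁.lineMap_eq_self h₂ hx₁₂ (closure_minimal htN hN hx)]
  · exact Or.inl (Or.inr ⟨htW₂ hx, fun h => hx₁ (hO'W₁ h)⟩)

lemma exists_isSmoothRetractionOn_of_isCompact (hN : IsCompact N)
    (hloc : ∀ x ∈ N, ∃ (W : Set F) (ρ : F → F), x ∈ W ∧ IsSmoothRetractionOn ρ W N) :
    ∃ (W : Set F) (ρ : F → F), N ⊆ W ∧ IsSmoothRetractionOn ρ W N := by
  suffices h : HasSmoothRetractionNear N (N ∩ N) by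
    obtain ⟨W, ρ, hW, hρ⟩ := inter_self N ▸ h
    exact ⟨W, ρ, subset_closure.trans hW, hρ⟩
  refine hN.induction_on (p := fun s => HasSmoothRetractionNear N (s ∩ N)) ?_ ?_ ?_ ?_
  · exact ⟨∅, id, by simp, isOpen_empty, contDiffOn_empty, mapsTo_empty .., by simp⟩
  · exact fun s t hst ht => ht.mono (inter_subset_inter_left _ hst)
  · intro s t hs ht
    rw [union_inter_distrib_right]
    exact hs.union hN.isClosed inter_subset_right ht
  · intro x hx
    obtain ⟨W, ρ, hxW, hρ⟩ := hloc x hx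
    obtain ⟨r, hr, hrW⟩ := nhds_basis_closedBall.mem_iff.1 (hρ.isOpen.mem_nhds hxW)
    exact ⟨closedBall x r, mem_nhdsWithin_of_mem_nhds (closedBall_mem_nhds x hr), W, ρ,
      (closure_minimal inter_subset_left isClosed_closedBall).trans hrW, hρ⟩

end SmoothRetraction

section Submanifold

variable {ν : ℕ}

/-- The projection of `ℝ^ν` onto its first `d` coordinates, as an endomorphism of `ℝ^ν`. -/
def truncCoord (ν d : ℕ) : EuclideanSpace ℝ (Fin ν) →L[ℝ] EuclideanSpace ℝ (Fin ν) :=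
  ∑ i ∈ ({i : Fin ν | (i : ℕ) < d} : Finset (Fin ν)),
    (EuclideanSpace.proj (𝕜 := ℝ) i).smulRight (EuclideanSpace.single i (1 : ℝ))

lemma truncCoord_apply (d : ℕ) (x : EuclideanSpace ℝ (Fin ν)) (i : Fin ν) :
    truncCoord ν d x i = if (i : ℕ) < d then x i else 0 := by
  simp [truncCoord, sum_apply, Pi.single_apply]

lemma truncCoord_eq_self_iff {d : ℕ} {x : EuclideanSpace ℝ (Fin ν)} :
    truncCoord ν d x = x ↔ ∀ i : Fin ν, d ≤ (i : ℕ) → x i = 0 := by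
  simp only [PiLp.ext_iff, truncCoord_apply, ite_eq_left_iff, not_lt, eq_comm (a := (0 : ℝ))]

lemma IsSmoothSubmanifold.exists_isSmoothRetractionOn {N : Set (EuclideanSpace ℝ (Fin ν))}
    (h : IsSmoothSubmanifold N) {x : EuclideanSpace ℝ (Fin ν)} (hx : x ∈ N) :
    ∃ (W : Set (EuclideanSpace ℝ (Fin ν))) (ρ : EuclideanSpace ℝ (Fin ν) → _),
      x ∈ W ∧ IsSmoothRetractionOn ρ W N := by
  obtain ⟨d, hd⟩ := h
  obtain ⟨U, V, φ, ψ, hU, hV, hxU, hφ, hψ, hφUV, hψVU, hψφ, hφψ, hN⟩ := hd x hx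
  let P := truncCoord ν d
  have hPφ : ContDiffOn ℝ (⊤ : ℕ∞) (fun y => P (φ y)) U := P.contDiff.comp_contDiffOn hφ
  have hfix : ∀ y ∈ U, y ∈ N → P (φ y) = φ y := fun y hy hyN =>
    truncCoord_eq_self_iff.2 ((hN y hy).1 hyN)
  refine ⟨U ∩ (fun y => P (φ y)) ⁻¹' V, fun y => ψ (P (φ y)), ⟨hxU, ?_⟩,
    hPφ.continuousOn.isOpen_inter_preimage hU hV,
    hψ.comp (hPφ.mono inter_subset_left) fun _ hy => hy.2, fun y hy => ?_, fun y hy hyN => ?_⟩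
  · rw [mem_preimage, hfix x hxU hx]
    exact hφUV hxU
  · rw [hN _ (hψVU hy.2), hφψ _ hy.2, ← truncCoord_eq_self_iff]
    ext i
    simp only [P, truncCoord_apply]
    split_ifs <;> rfl
  · simp only [hfix y hy.1 hyN, hψφ y hy.1]

end Submanifold

section RelativeHomotopy

open ContinuousMap

section TopologicalSpaces

variable {X Y Z : Type*} [TopologicalSpace X] [TopologicalSpace Y] [TopologicalSpace Z]

lemma homotopicRel_comp_right {f g : C(Y, Z)} {S : Set X} {T : Set Y} (h : f.HomotopicRel g T)
    (φ : C(X, Y)) (hφ : MapsTo φ S T) : (f.comp φ).HomotopicRel (g.comp φ) S :=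
  h.map fun H =>
    { toContinuousMap := H.toContinuousMap.comp ((ContinuousMap.id _).prodMap φ)
      map_zero_left := fun x => H.apply_zero (φ x)
      map_one_left := fun x => H.apply_one (φ x)
      prop' := fun t _ hx => H.eq_fst t (hφ hx) }

lemma homotopicRel_mono {f g : C(X, Y)} {S T : Set X} (h : f.HomotopicRel g T) (hST : S ⊆ T) :
    f.HomotopicRel g S :=
  homotopicRel_comp_right h (ContinuousMap.id X) hST

end TopologicalSpaces

section Dilation

variable {E X : Type*} [NormedAddCommGroup E] [NormedSpace ℝ E] [TopologicalSpace X]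
  {f : C(E, X)} {b : X} {r : ℝ}

lemma homotopicRel_comp_dilation (hfb : ∀ x, r ≤ ‖x‖ → f x = b) {c : ℝ} (hc : 1 ≤ c) :
    f.HomotopicRel (f.comp ⟨fun x => c • x, by fun_prop⟩) {x | r ≤ ‖x‖} := by
  refine ⟨⟨⟨⟨fun z => f ((1 + (z.1 : ℝ) * (c - 1)) • z.2), by fun_prop⟩, fun x => by simp,
    fun x => by simp⟩, fun t x hx => ?_⟩⟩
  have hscale : 1 ≤ 1 + (t : ℝ) * (c - 1) :=
    le_add_of_nonneg_right (mul_nonneg t.2.1 (sub_nonneg.2 hc))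
  have hnorm : r ≤ ‖(1 + (t : ℝ) * (c - 1)) • x‖ := by
    rw [norm_smul, Real.norm_of_nonneg (zero_le_one.trans hscale)]
    exact (mem_ofPred.1 hx).trans (le_mul_of_one_le_left (norm_nonneg x) hscale)
  exact (hfb _ hnorm).trans (hfb x hx).symm

lemma homotopicRel_const_of_large_norm (hr : 0 < r) (hfb : ∀ x, r ≤ ‖x‖ → f x = b) {R : ℝ}
    (h : f.HomotopicRel (.const E b) {x | R ≤ ‖x‖}) :
    f.HomotopicRel (.const E b) {x | r ≤ ‖x‖} := by
  have hc : 1 ≤ max 1 (R / r) := le_max_left ..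
  refine (homotopicRel_comp_dilation hfb hc).trans
    (homotopicRel_comp_right h _ fun x (hx : r ≤ ‖x‖) => ?_)
  rw [mem_ofPred, coe_mk, norm_smul, Real.norm_of_nonneg (zero_le_one.trans hc)]
  calc R = R / r * r := (div_mul_cancel₀ R hr.ne').symm
    _ ≤ max 1 (R / r) * ‖x‖ := by gcongr; exact le_max_right ..

end Dilation

section GenLoop

variable {ι X : Type*} [TopologicalSpace X] {b : X}

lemma exists_genLoop_not_homotopic_const (h : Nontrivial (HomotopyGroup ι X b)) :
    ∃ γ : GenLoop ι X b, ¬ GenLoop.Homotopic γ GenLoop.const := by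
  by_contra! hc
  obtain ⟨α, β, hαβ⟩ := h
  induction α using Quotient.inductionOn
  induction β using Quotient.inductionOn
  exact hαβ (Quotient.sound ((hc _).trans (hc _).symm))

/-- A generalized loop on the unit cube, recentred at the origin and extended to `ℝ^ι` by clamping
each coordinate; outside the cube `[-1/2, 1/2]^ι` it takes the value `b`. -/
def genLoopExtend (γ : GenLoop ι X b) : C(ι → ℝ, X) :=
  γ.1.comp ⟨fun x i => projIcc 0 1 zero_le_one (1 / 2 + x i), by fun_prop⟩

variable [Fintype ι]

lemma genLoopExtend_eq_of_le_norm (γ : GenLoop ι X b) {x : ι → ℝ} (hx : 1 / 2 ≤ ‖x‖) :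
    genLoopExtend γ x = b := by
  obtain ⟨i, hi⟩ : ∃ i, 1 / 2 ≤ |x i| := by
    by_contra! hc
    exact hx.not_gt ((pi_norm_lt_iff (by norm_num)).2 hc)
  refine γ.2 _ ⟨i, ?_⟩
  rcases le_abs'.1 hi with hi | hi
  · exact Or.inl (projIcc_of_le_left zero_le_one (by linarith))
  · exact Or.inr (projIcc_of_right_le zero_le_one (by linarith))

lemma homotopic_const_of_genLoopExtend {γ : GenLoop ι X b}
    (h : (genLoopExtend γ).HomotopicRel (.const _ b) {x | 1 / 2 ≤ ‖x‖}) :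
    GenLoop.Homotopic γ GenLoop.const := by
  let center : C(ι → unitInterval, ι → ℝ) := ⟨fun y i => y i - 1 / 2, by fun_prop⟩
  have hγ : (genLoopExtend γ).comp center = γ.1 := by
    ext y
    simp only [genLoopExtend, comp_apply, coe_mk, center, add_sub_cancel, projIcc_val]
  have hboundary : MapsTo center (Cube.boundary ι) {x | 1 / 2 ≤ ‖x‖} := by
    rintro y ⟨i, hi⟩
    refine le_trans ?_ (norm_le_pi_norm _ i)
    rcases hi with hi | hi <;> norm_num [center, hi]
  have hcenter := homotopicRel_comp_right h center hboundary
  rwa [hγ] at hcenter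

end GenLoop

lemma exists_continuousLinearEquiv_norm_le {E G : Type*} [NormedAddCommGroup E]
    [NormedSpace ℝ E] [NormedAddCommGroup G] [NormedSpace ℝ G] (e : E ≃L[ℝ] G) :
    ∃ φ : E ≃L[ℝ] G, ∀ x, ‖x‖ ≤ ‖φ x‖ := by
  let c := ‖(e.symm : G →L[ℝ] E)‖ + 1
  have hc : 0 < c := by positivity
  refine ⟨e.trans (ContinuousLinearEquiv.smulLeft (Units.mk0 c hc.ne')), fun x => ?_⟩
  calc ‖x‖ = ‖(e.symm : G →L[ℝ] E) (e x)‖ := by simp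
    _ ≤ c * ‖e x‖ := ContinuousLinearMap.le_of_opNorm_le _ (le_add_of_nonneg_right zero_le_one) _
    _ = ‖c • e x‖ := by rw [norm_smul, Real.norm_of_nonneg hc.le]

section Retract

variable {F : Type*} [NormedAddCommGroup F] [NormedSpace ℝ F] {N W : Set F} {ρ : F → F}

lemma IsSmoothRetractionOn.homotopicRel_comp_of_segment_subset
    (hρ : IsSmoothRetractionOn ρ W N) {X : Type*} [TopologicalSpace X] {f f' : C(X, N)}
    {g : C(X, F)} (hf' : ∀ x, (f' x : F) = ρ (g x))
    (hfg : ∀ x, segment ℝ (f x : F) (g x) ⊆ W) : f.HomotopicRel f' {x | (f x : F) = g x} := by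
  let σ : unitInterval × X → F := fun z => AffineMap.lineMap (f z.2 : F) (g z.2) (z.1 : ℝ)
  have hσW : ∀ z, σ z ∈ W := fun z => hfg z.2 <| by
    rw [segment_eq_image_lineMap]
    exact mem_image_of_mem _ z.1.2
  have hσ : Continuous σ := by
    simp only [σ, AffineMap.lineMap_apply_module]
    fun_prop
  have hfix : ∀ x, ρ (f x) = f x := fun x => hρ.fixes _ (hfg x (left_mem_segment ..)) (f x).2
  refine ⟨⟨⟨⟨fun z => ⟨ρ (σ z), hρ.mapsTo (hσW z)⟩,
    (hρ.contDiffOn.continuousOn.comp_continuous hσ hσW).subtype_mk _⟩,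
    fun x => Subtype.ext ?_, fun x => Subtype.ext ?_⟩, fun t x hx => Subtype.ext ?_⟩⟩
  · simp [σ, hfix]
  · simp [σ, hf']
  · simp [σ, ← mem_ofPred.1 hx, hfix]

variable {E : Type*} [NormedAddCommGroup E] [NormedSpace ℝ E] [FiniteDimensional ℝ E]

lemma IsSmoothRetractionOn.exists_contDiff_homotopicRel (hρ : IsSmoothRetractionOn ρ W N)
    (hN : IsCompact N) (hNW : N ⊆ W) (g : C(E, N)) {S U : Set E} (hS : IsClosed S)
    (hU : U ∈ 𝓝ˢ S) (hgU : ContDiffOn ℝ (⊤ : ℕ∞) (fun x => (g x : F)) U) :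
    ∃ f : C(E, N), ContDiff ℝ (⊤ : ℕ∞) (fun x => (f x : F)) ∧ g.HomotopicRel f S := by
  obtain ⟨δ, hδ, hδW⟩ := hN.exists_thickening_subset_open hρ.isOpen hNW
  obtain ⟨h, hh, hhg, hhS, -⟩ := Continuous.exists_contDiff_approx_and_eqOn (⊤ : ℕ∞)
    (f := fun x => (g x : F)) (by fun_prop) (continuous_const (y := δ)) (fun _ => hδ) hS hU hgU
  have hsegment : ∀ x, segment ℝ (g x : F) (h x) ⊆ W := fun x =>
    ((convex_ball (g x : F) δ).segment_subset (mem_ball_self hδ) (hhg x)).trans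
      ((ball_subset_thickening (g x).2 δ).trans hδW)
  have hhW : ∀ x, h x ∈ W := fun x => hsegment x (right_mem_segment ..)
  have hρh : ContDiff ℝ (⊤ : ℕ∞) (ρ ∘ h) := hρ.contDiffOn.comp_contDiff hh hhW
  let f : C(E, N) := ⟨fun x => ⟨ρ (h x), hρ.mapsTo (hhW x)⟩, hρh.continuous.subtype_mk _⟩
  exact ⟨f, hρh, homotopicRel_mono (hρ.homotopicRel_comp_of_segment_subset (f' := f)
    (g := ⟨h, hh.continuous⟩) (fun _ => rfl) hsegment) fun x hx => (hhS hx).symm⟩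

theorem IsSmoothRetractionOn.exists_contDiff_not_homotopicRel_const
    (hρ : IsSmoothRetractionOn ρ W N) (hN : IsCompact N) (hNW : N ⊆ W) {ι : Type*} [Finite ι]
    (e : E ≃L[ℝ] (ι → ℝ)) {b : N} (hπ : Nontrivial (HomotopyGroup ι N b)) :
    ∃ f : C(E, N), ContDiff ℝ (⊤ : ℕ∞) (fun x => (f x : F)) ∧ (∀ x, 1 ≤ ‖x‖ → f x = b) ∧
      ¬ f.HomotopicRel (.const E b) {x | 1 ≤ ‖x‖} := by
  have := Fintype.ofFinite ι
  obtain ⟨γ, hγ⟩ := exists_genLoop_not_homotopic_const hπ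
  obtain ⟨φ, hφ⟩ := exists_continuousLinearEquiv_norm_le e
  let g : C(E, N) := (genLoopExtend γ).comp (φ : C(E, ι → ℝ))
  have hg : ∀ x, 1 / 2 ≤ ‖x‖ → g x = b := fun x hx =>
    genLoopExtend_eq_of_le_norm γ (hx.trans (hφ x))
  obtain ⟨f, hf, hgf⟩ := hρ.exists_contDiff_homotopicRel hN hNW g
    (S := {x | 1 ≤ ‖x‖}) (U := {x | 1 / 2 < ‖x‖}) (isClosed_le continuous_const continuous_norm)
    ((isOpen_lt continuous_const continuous_norm).mem_nhdsSet.2 fun x hx =>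
      (one_half_lt_one (α := ℝ)).trans_le hx)
    (contDiffOn_const (c := (b : F)) |>.congr fun x hx => by rw [hg x (le_of_lt hx)])
  refine ⟨f, hf, fun x hx => (hgf.fst_eq_snd hx).symm.trans (hg x ?_), fun hfb => hγ ?_⟩
  · exact one_half_lt_one.le.trans hx
  obtain ⟨R, hR⟩ := (isCompact_closedBall (0 : E) 1).exists_bound_of_continuousOn
    φ.continuous.continuousOn
  have hlarge : MapsTo φ.symm {y | R < ‖y‖} {x | 1 ≤ ‖x‖} := fun y hy => by
    by_contra hlt
    exact hy.not_ge (φ.apply_symm_apply y ▸ hR _ (mem_closedBall_zero_iff.2 (not_le.1 hlt).le))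
  refine homotopic_const_of_genLoopExtend (homotopicRel_const_of_large_norm (R := R + 1)
    (by norm_num) (fun y hy => genLoopExtend_eq_of_le_norm γ hy) ?_)
  have hG := homotopicRel_comp_right (hgf.trans hfb) (φ.symm : C(ι → ℝ, E)) hlarge
  have hgφ : g.comp (φ.symm : C(ι → ℝ, E)) = genLoopExtend γ := by
    ext1 y
    exact congrArg (genLoopExtend γ) (φ.apply_symm_apply y)
  exact homotopicRel_mono (hgφ ▸ hG) fun y (hy : R + 1 ≤ ‖y‖) => (lt_add_one R).trans_le hy

end Retract

end RelativeHomotopy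

section Cap

open ContinuousMap

variable {E : Type*} [NormedAddCommGroup E] [NormedSpace ℝ E]

/-- The radial retraction of `E` onto the closed ball of radius `R` about the origin. -/
def ballProj (R : ℝ) (x : E) : E := (R / max R ‖x‖) • x

section BallProj

variable {R : ℝ} (hR : 0 < R)
include hR

lemma continuous_ballProj : Continuous (ballProj R : E → E) :=
  (continuous_const.div (by fun_prop) fun _ => (lt_max_of_lt_left hR).ne').smul continuous_id

lemma ballProj_of_norm_le {x : E} (hx : ‖x‖ ≤ R) : ballProj R x = x := by
  rw [ballProj, max_eq_left hx, div_self hR.ne', one_smul]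

lemma norm_ballProj_of_le_norm {x : E} (hx : R ≤ ‖x‖) : ‖ballProj R x‖ = R := by
  rw [ballProj, max_eq_right hx, norm_smul, Real.norm_of_nonneg (div_nonneg hR.le (norm_nonneg x)),
    div_mul_cancel₀ _ (hR.trans_le hx).ne']

lemma norm_ballProj_le (x : E) : ‖ballProj R x‖ ≤ R := by
  rcases le_total ‖x‖ R with hx | hx
  · rwa [ballProj_of_norm_le hR hx]
  · exact (norm_ballProj_of_le_norm hR hx).le

end BallProj

lemma homotopicRel_const_of_comp_smul {X : Type*} [TopologicalSpace X] {f : C(E, X)} {b : X}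
    {c R : ℝ} (hc : 0 < c)
    (h : (f.comp ⟨fun x => c⁻¹ • x, by fun_prop⟩).HomotopicRel (.const E b) {x | c * R ≤ ‖x‖}) :
    f.HomotopicRel (.const E b) {x | R ≤ ‖x‖} := by
  have hcomp := homotopicRel_comp_right h ⟨fun x => c • x, by fun_prop⟩
    (S := {x | R ≤ ‖x‖}) fun x (hx : R ≤ ‖x‖) => by
      rw [mem_ofPred, coe_mk, norm_smul, Real.norm_of_nonneg hc.le]
      gcongr
  convert hcomp using 1
  · ext x
    simp [smul_smul, hc.ne']
  · rfl

variable {F : Type*} [NormedAddCommGroup F] {N : Set F} {R : ℝ}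
  {f : C(E, N)} {b : N} {V : E × ℝ → F} {h : E → ℝ}

lemma exists_homotopicRel_graph (hR : 0 < R) (hfb : ∀ x, R ≤ ‖x‖ → f x = b)
    (hV : ContinuousOn V (closedBall 0 R ×ˢ Icc (0 : ℝ) 1))
    (hVN : MapsTo V (closedBall 0 R ×ˢ Icc (0 : ℝ) 1) N)
    (hV0 : ∀ x ∈ closedBall 0 R, V (x, 0) = f x)
    (hh : ContinuousOn h (closedBall 0 R)) (hhI : MapsTo h (closedBall 0 R) (Icc 0 1))
    (hh0 : ∀ x ∈ sphere 0 R, h x = 0) :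
    ∃ g : C(E, N), (∀ x, (g x : F) = V (ballProj R x, h (ballProj R x))) ∧
      f.HomotopicRel g {x | R ≤ ‖x‖} := by
  have hP : ∀ x : E, ballProj R x ∈ closedBall 0 R := fun x =>
    mem_closedBall_zero_iff.2 (norm_ballProj_le hR x)
  have hhP : Continuous fun x => h (ballProj R x) :=
    hh.comp_continuous (continuous_ballProj hR) hP
  let Φ : unitInterval × E → E × ℝ := fun z => (ballProj R z.2, z.1 * h (ballProj R z.2))
  have hΦ : Continuous Φ := ((continuous_ballProj hR).comp continuous_snd).prodMk
    ((continuous_subtype_val.comp continuous_fst).mul (hhP.comp continuous_snd))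
  have hΦ_mem : ∀ z, Φ z ∈ closedBall 0 R ×ˢ Icc (0 : ℝ) 1 := fun z =>
    ⟨hP z.2, unitInterval.mul_mem z.1.2 (hhI (hP z.2))⟩
  let H : C(unitInterval × E, N) := ⟨fun z => ⟨V (Φ z), hVN (hΦ_mem z)⟩,
    (hV.comp_continuous hΦ hΦ_mem).subtype_mk _⟩
  have hV_sphere : ∀ x ∈ sphere (0 : E) R, V (x, 0) = b := fun x hx => by
    rw [hV0 x (sphere_subset_closedBall hx), hfb x (mem_sphere_zero_iff_norm.1 hx).ge]
  have hH_far : ∀ t x, R ≤ ‖x‖ → H (t, x) = f x := fun t x hx => Subtype.ext <| by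
    have hPx : ballProj R x ∈ sphere 0 R :=
      mem_sphere_zero_iff_norm.2 (norm_ballProj_of_le_norm hR hx)
    rw [hfb x hx, ← hV_sphere _ hPx]
    simp only [H, Φ, coe_mk, hh0 _ hPx, mul_zero]
  refine ⟨H.comp (.prodMk (.const E 1) (.id E)), fun x => ?_, ⟨⟨⟨H, fun x => ?_, fun x => ?_⟩,
    fun t x hx => hH_far t x hx⟩⟩⟩
  · simp [H, Φ]
  · rcases le_total R ‖x‖ with hx | hx
    · exact hH_far 0 x hx
    · refine Subtype.ext ?_
      simp [H, Φ, ballProj_of_norm_le hR hx, hV0 x (mem_closedBall_zero_iff.2 hx)]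
  · rfl

variable [NormedSpace ℝ F] {W : Set F} {ρ : F → F}

-- Otherwise sliding `f` up to the graph of `h` and then contracting the resulting map to `b`
-- inside `ball b δ` would be a nullhomotopy of `f`.
lemma IsSmoothRetractionOn.exists_le_dist_graph (hρ : IsSmoothRetractionOn ρ W N) {δ : ℝ}
    (hδ : 0 < δ) (hδW : ball (b : F) δ ⊆ W) (hR : 0 < R) (hfb : ∀ x, R ≤ ‖x‖ → f x = b)
    (hf : ¬ f.HomotopicRel (.const E b) {x | R ≤ ‖x‖})
    (hV : ContinuousOn V (closedBall 0 R ×ˢ Icc (0 : ℝ) 1))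
    (hVN : MapsTo V (closedBall 0 R ×ˢ Icc (0 : ℝ) 1) N)
    (hV0 : ∀ x ∈ closedBall 0 R, V (x, 0) = f x)
    (hh : ContinuousOn h (closedBall 0 R)) (hhI : MapsTo h (closedBall 0 R) (Icc 0 1))
    (hh0 : ∀ x ∈ sphere 0 R, h x = 0) :
    ∃ x₀ ∈ ball 0 R, δ ≤ dist (V (x₀, h x₀)) b := by
  by_contra! hclose
  obtain ⟨g, hg, hfg⟩ := exists_homotopicRel_graph hR hfb hV hVN hV0 hh hhI hh0
  have hgb : ∀ x, R ≤ ‖x‖ → g x = b := fun x hx => (hfg.fst_eq_snd hx).symm.trans (hfb x hx)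
  have hg_ball : ∀ x, (g x : F) ∈ ball (b : F) δ := fun x => by
    rcases lt_or_ge ‖x‖ R with hx | hx
    · rw [hg, ballProj_of_norm_le hR hx.le]
      exact hclose x (mem_ball_zero_iff.2 hx)
    · rw [hgb x hx]
      exact mem_ball_self hδ
  have hb : ρ b = b := hρ.fixes _ (hδW (mem_ball_self hδ)) b.2
  have hgconst := hρ.homotopicRel_comp_of_segment_subset (f := g) (f' := .const E b)
    (g := .const E (b : F)) (fun _ => hb.symm) fun x =>
      ((convex_ball (b : F) δ).segment_subset (hg_ball x) (mem_ball_self hδ)).trans hδW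
  exact hf (hfg.trans (homotopicRel_mono hgconst fun x hx => congrArg Subtype.val (hgb x hx)))

end Cap

section Morrey

open Module

variable {E F : Type*} [NormedAddCommGroup E] [NormedSpace ℝ E] [NormedAddCommGroup F]
  [NormedSpace ℝ F] {R : ℝ} {w : E → F} {b : F} {x₀ v : E}

lemma C1OnNhd.mono {f : E → F} {A B : Set E} (hf : C1OnNhd f B) (hAB : A ⊆ B) : C1OnNhd f A :=
  let ⟨O, hO, hBO, hfO⟩ := hf
  ⟨O, hO, hAB.trans hBO, hfO⟩

lemma C1OnNhd.contDiffAt {f : E → F} {A : Set E} (hf : C1OnNhd f A) {x : E} (hx : x ∈ A) :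
    ContDiffAt ℝ 1 f x :=
  let ⟨_, hO, hAO, hfO⟩ := hf
  hfO.contDiffAt (hO.mem_nhds (hAO hx))

lemma C1OnNhd.continuousOn {f : E → F} {A : Set E} (hf : C1OnNhd f A) : ContinuousOn f A :=
  fun _ hx => (hf.contDiffAt hx).continuousAt.continuousWithinAt

lemma exists_exit_time_closedBall (hx₀ : x₀ ∈ ball 0 R) (hv : R ≤ ‖x₀ + v‖) :
    ∃ τ ∈ Icc (0 : ℝ) 1, x₀ + τ • v ∈ sphere 0 R ∧ ∀ s ∈ Ico 0 τ, x₀ + s • v ∈ ball 0 R := by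
  have hcont : ContinuousOn (fun s : ℝ => ‖x₀ + s • v‖) (Icc 0 1) := by fun_prop
  obtain ⟨τ, hτ, hτR : ‖x₀ + τ • v‖ = R⟩ := intermediate_value_Icc zero_le_one hcont
    (show R ∈ Icc _ _ by simpa [hv] using (mem_ball_zero_iff.1 hx₀).le)
  refine ⟨τ, hτ, mem_sphere_zero_iff_norm.2 hτR, fun s hs => ?_⟩
  have hτ0 : 0 < τ := hs.1.trans_lt hs.2
  have hexit : x₀ + τ • v ∈ closure (ball (0 : E) R) := by
    rw [closure_ball _ (pos_of_mem_ball hx₀).ne']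
    exact mem_closedBall_zero_iff.2 hτR.le
  have hmem := (convex_ball (0 : E) R).add_smul_mem_interior' hexit (y := -(τ • v))
    (by simpa [isOpen_ball.interior_eq] using hx₀) (t := 1 - s / τ)
    ⟨sub_pos.2 ((div_lt_one hτ0).2 hs.2), sub_le_self _ (div_nonneg hs.1 hτ0.le)⟩
  rw [isOpen_ball.interior_eq] at hmem
  convert hmem using 1
  match_scalars <;> field_simp
  ring

lemma enorm_sub_le_lintegral_ray (hw : C1OnNhd w (closedBall 0 R))
    (hwb : ∀ x ∈ sphere 0 R, w x = b) (hx₀ : x₀ ∈ ball 0 R) (hv : R ≤ ‖x₀ + v‖) :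
    ‖w x₀ - b‖ₑ ≤
      (∫⁻ s in Ioo (0 : ℝ) 1, (ball 0 R).indicator (fun x => ‖fderiv ℝ w x‖ₑ) (x₀ + s • v)) *
        ‖v‖ₑ := by
  obtain ⟨τ, hτ, hτR, hball⟩ := exists_exit_time_closedBall hx₀ hv
  have hmem : MapsTo (fun s : ℝ => x₀ + s • v) (Icc 0 τ) (closedBall 0 R) := fun s hs => by
    rcases hs.2.eq_or_lt with rfl | h
    · exact sphere_subset_closedBall hτR
    · exact ball_subset_closedBall (hball s ⟨hs.1, h⟩)
  have hray : ∀ s, HasDerivAt (fun s : ℝ => x₀ + s • v) v s := fun s => by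
    simpa using ((hasDerivAt_id s).smul_const v).const_add x₀
  have hC1 : ContDiffOn ℝ 1 (fun s : ℝ => w (x₀ + s • v)) (Icc 0 τ) := fun s hs =>
    ((hw.contDiffAt (hmem hs)).comp s (by fun_prop)).contDiffWithinAt
  calc ‖w x₀ - b‖ₑ = ‖w (x₀ + τ • v) - w (x₀ + (0 : ℝ) • v)‖ₑ := by
        rw [hwb _ hτR, zero_smul, add_zero, ← enorm_neg, neg_sub]
    _ ≤ ∫⁻ s in Icc 0 τ, ‖deriv (fun s : ℝ => w (x₀ + s • v)) s‖ₑ :=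
        enorm_sub_le_lintegral_deriv_of_contDiffOn_Icc hC1 hτ.1
    _ = ∫⁻ s in Ioo 0 τ, ‖deriv (fun s : ℝ => w (x₀ + s • v)) s‖ₑ :=
        setLIntegral_congr Ioo_ae_eq_Icc.symm
    _ ≤ ∫⁻ s in Ioo 0 τ, (ball 0 R).indicator (fun x => ‖fderiv ℝ w x‖ₑ) (x₀ + s • v) * ‖v‖ₑ := by
        refine setLIntegral_mono' measurableSet_Ioo fun s hs => ?_
        have hs' := hball s ⟨hs.1.le, hs.2⟩
        have hw_at := (hw.contDiffAt (ball_subset_closedBall hs')).differentiableAt one_ne_zero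
        have hderiv : deriv (fun s : ℝ => w (x₀ + s • v)) s = fderiv ℝ w (x₀ + s • v) v :=
          (hw_at.hasFDerivAt.comp_hasDerivAt s (hray s)).deriv
        rw [hderiv, indicator_of_mem hs']
        exact ContinuousLinearMap.le_opENorm _ _
    _ ≤ ∫⁻ s in Ioo 0 1, (ball 0 R).indicator (fun x => ‖fderiv ℝ w x‖ₑ) (x₀ + s • v) * ‖v‖ₑ :=
        lintegral_mono_set (Ioo_subset_Ioo_right hτ.2)
    _ = _ := lintegral_mul_const' _ _ enorm_ne_top

variable [MeasurableSpace E] {μ : Measure E} [μ.IsAddHaarMeasure] {p : ℝ}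

lemma lintegral_Ioo_rpow_ne_top {a : ℝ} (ha : -1 < a) :
    ∫⁻ s in Ioo (0 : ℝ) 1, ENNReal.ofReal (s ^ a) ≠ ⊤ :=
  (Integrable.lintegral_lt_top <|
    (intervalIntegral.integrableOn_Ioo_rpow_iff one_pos).2 ha).ne

/-- The constant in Morrey's inequality `enorm_sub_rpow_le_morreyConst`. -/
def morreyConst (μ : Measure E) (p : ℝ) : ℝ≥0∞ :=
  ENNReal.ofReal 4 ^ p *
    (∫⁻ s in Ioo (0 : ℝ) 1, ENNReal.ofReal (s ^ (-(finrank ℝ E / p)))) ^ p / μ (ball 0 1)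

lemma morreyConst_ne_top (hp : finrank ℝ E < p) : morreyConst μ p ≠ ⊤ := by
  have hp0 : 0 < p := (Nat.cast_nonneg _).trans_lt hp
  have hint := lintegral_Ioo_rpow_ne_top (neg_lt_neg ((div_lt_one hp0).2 hp))
  exact ENNReal.div_ne_top (by finiteness) (measure_ball_pos μ 0 one_pos).ne'

variable [FiniteDimensional ℝ E] [BorelSpace E]

lemma lintegral_comp_add_smul {G : E → ℝ≥0∞} (hG : Measurable G) (x₀ : E) {s : ℝ} (hs : 0 < s) :
    ∫⁻ v, G (x₀ + s • v) ∂μ = ENNReal.ofReal (s ^ finrank ℝ E)⁻¹ * ∫⁻ v, G v ∂μ := by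
  calc ∫⁻ v, G (x₀ + s • v) ∂μ = ∫⁻ z, G (x₀ + z) ∂(μ.map (s • ·)) := by
        rw [lintegral_map (by fun_prop) (by fun_prop)]
    _ = _ := by
        rw [Measure.map_addHaar_smul _ hs.ne', lintegral_smul_measure, lintegral_add_left_eq_self,
          abs_of_pos (by positivity), smul_eq_mul]

lemma setLIntegral_comp_add_smul_le (hp : 1 ≤ p) {G : E → ℝ≥0∞} (hG : Measurable G) (A : Set E)
    (x₀ : E) {s : ℝ} (hs : 0 < s) :
    ∫⁻ v in A, G (x₀ + s • v) ∂μ ≤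
      ENNReal.ofReal (s ^ (-(finrank ℝ E / p))) *
        ((∫⁻ v, G v ^ p ∂μ) ^ (1 / p) * μ A ^ (1 - 1 / p)) := by
  have : 0 < p := one_pos.trans_le hp
  have hholder := eLpNorm'_le_eLpNorm'_mul_rpow_measure_univ one_pos hp (μ := μ.restrict A)
    (f := fun v => G (x₀ + s • v)) (hG.comp (by fun_prop)).aestronglyMeasurable
  simp only [eLpNorm', enorm_eq_self, ENNReal.rpow_one, div_one, Measure.restrict_apply_univ]
    at hholder
  refine hholder.trans ?_
  rw [← mul_assoc]
  gcongr
  calc (∫⁻ v in A, G (x₀ + s • v) ^ p ∂μ) ^ (1 / p)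
      ≤ (∫⁻ v, G (x₀ + s • v) ^ p ∂μ) ^ (1 / p) := by
        gcongr
        exact Measure.restrict_le_self
    _ = _ := by
        rw [lintegral_comp_add_smul (hG.pow_const p) x₀ hs,
          ENNReal.mul_rpow_of_nonneg _ _ (by positivity),
          ENNReal.ofReal_rpow_of_nonneg (by positivity) (by positivity), ← Real.rpow_natCast,
          ← Real.rpow_neg hs.le, ← Real.rpow_mul hs.le]
        ring_nf

lemma setLIntegral_ray_le (hp : 1 ≤ p) {G : E → ℝ≥0∞} (hG : Measurable G) (A : Set E) (x₀ : E) :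
    ∫⁻ v in A, ∫⁻ s in Ioo (0 : ℝ) 1, G (x₀ + s • v) ∂volume ∂μ ≤
      (∫⁻ s in Ioo (0 : ℝ) 1, ENNReal.ofReal (s ^ (-(finrank ℝ E / p)))) *
        ((∫⁻ v, G v ^ p ∂μ) ^ (1 / p) * μ A ^ (1 - 1 / p)) := by
  rw [lintegral_lintegral_swap (Measurable.aemeasurable (by fun_prop)),
    ← lintegral_mul_const _ (by fun_prop)]
  exact setLIntegral_mono' measurableSet_Ioo fun s hs =>
    setLIntegral_comp_add_smul_le hp hG A x₀ hs.1

variable [CompleteSpace F]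

-- Averages the ray estimate over the directions `v ∈ ball ((3 * R) • e) R`, all of which leave
-- `ball x₀ R` before time one.
lemma enorm_sub_mul_measure_ball_le [Nontrivial E] (hp : 1 ≤ p)
    (hw : C1OnNhd w (closedBall 0 R)) (hwb : ∀ x ∈ sphere 0 R, w x = b) (hx₀ : x₀ ∈ ball 0 R) :
    ‖w x₀ - b‖ₑ * μ (ball 0 R) ≤
      ENNReal.ofReal (4 * R) *
        ((∫⁻ s in Ioo (0 : ℝ) 1, ENNReal.ofReal (s ^ (-(finrank ℝ E / p)))) *
          ((∫⁻ x in ball 0 R, ‖fderiv ℝ w x‖ₑ ^ p ∂μ) ^ (1 / p) * μ (ball 0 R) ^ (1 - 1 / p))) := by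
  have hR : 0 < R := pos_of_mem_ball hx₀
  obtain ⟨c, hc⟩ : ∃ c : E, ‖c‖ = 3 * R := exists_norm_eq E (by positivity)
  set G : E → ℝ≥0∞ := (ball 0 R).indicator fun x => ‖fderiv ℝ w x‖ₑ
  have hG : Measurable G := (measurable_fderiv ℝ w).enorm.indicator measurableSet_ball
  have hGp : ∫⁻ v, G v ^ p ∂μ = ∫⁻ x in ball 0 R, ‖fderiv ℝ w x‖ₑ ^ p ∂μ := by
    rw [← lintegral_indicator measurableSet_ball]
    congr! with v
    by_cases hv : v ∈ ball 0 R <;> simp [G, hv, one_pos.trans_le hp]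
  have hball : μ (ball c R) = μ (ball 0 R) := by simp [Measure.addHaar_ball_center]
  have hexit : ∀ v ∈ ball c R, R ≤ ‖x₀ + v‖ ∧ ‖v‖ ≤ 4 * R := fun v hv => by
    rw [mem_ball_iff_norm] at hv
    rw [mem_ball_zero_iff] at hx₀
    constructor
    · linarith [norm_sub_norm_le c v, norm_sub_rev c v, norm_le_add_norm_add' x₀ v]
    · linarith [norm_sub_norm_le v c]
  calc ‖w x₀ - b‖ₑ * μ (ball 0 R) = ∫⁻ _ in ball c R, ‖w x₀ - b‖ₑ ∂μ := by
        rw [setLIntegral_const, hball]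
    _ ≤ ∫⁻ v in ball c R, ENNReal.ofReal (4 * R) * (∫⁻ s in Ioo (0 : ℝ) 1, G (x₀ + s • v)) ∂μ := by
        refine setLIntegral_mono' measurableSet_ball fun v hv => ?_
        refine (enorm_sub_le_lintegral_ray hw hwb hx₀ (hexit v hv).1).trans ?_
        rw [mul_comm, ← ofReal_norm]
        gcongr
        exact (hexit v hv).2
    _ ≤ _ := by
        rw [lintegral_const_mul' _ _ ENNReal.ofReal_ne_top, ← hGp, ← hball]
        gcongr
        exact setLIntegral_ray_le hp hG _ x₀

lemma enorm_sub_rpow_le_morreyConst [Nontrivial E] (hp : 1 ≤ p)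
    (hw : C1OnNhd w (closedBall 0 R)) (hwb : ∀ x ∈ sphere 0 R, w x = b) (hx₀ : x₀ ∈ ball 0 R) :
    ‖w x₀ - b‖ₑ ^ p ≤ morreyConst μ p * ENNReal.ofReal (R ^ (p - finrank ℝ E)) *
      ∫⁻ x in ball 0 R, ‖fderiv ℝ w x‖ₑ ^ p ∂μ := by
  have hR : 0 < R := pos_of_mem_ball hx₀
  have hp0 : 0 < p := one_pos.trans_le hp
  set a := μ (ball 0 R) with ha_def
  set c := ∫⁻ s in Ioo (0 : ℝ) 1, ENNReal.ofReal (s ^ (-(finrank ℝ E / p))) with hc_def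
  set I := ∫⁻ x in ball 0 R, ‖fderiv ℝ w x‖ₑ ^ p ∂μ
  have ha0 : a ≠ 0 := (measure_ball_pos μ 0 hR).ne'
  have ha_top : a ≠ ⊤ := measure_ball_lt_top.ne
  have ha : a = ENNReal.ofReal (R ^ finrank ℝ E) * μ (ball 0 1) := μ.addHaar_ball_of_pos 0 hR
  have hroot : ‖w x₀ - b‖ₑ * a ^ (1 / p) ≤ ENNReal.ofReal (4 * R) * (c * I ^ (1 / p)) := by
    have hsplit : a = a ^ (1 / p) * a ^ (1 - 1 / p) := by
      rw [← ENNReal.rpow_add _ _ ha0 ha_top, add_sub_cancel, ENNReal.rpow_one]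
    have h := enorm_sub_mul_measure_ball_le (μ := μ) hp hw hwb hx₀
    rw [← ha_def] at h
    nth_rw 1 [hsplit] at h
    rw [← mul_assoc, ← mul_assoc c, ← mul_assoc (ENNReal.ofReal _)] at h
    exact (ENNReal.mul_le_mul_iff_left (by simp [ha0, ha_top]) (by finiteness)).1 h
  have hpow : ‖w x₀ - b‖ₑ ^ p * a ≤ ENNReal.ofReal (4 * R) ^ p * (c ^ p * I) := by
    have h := ENNReal.rpow_le_rpow hroot hp0.le
    simpa only [ENNReal.mul_rpow_of_nonneg _ _ hp0.le, ← ENNReal.rpow_mul,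
      one_div_mul_cancel hp0.ne', ENNReal.rpow_one] using h
  calc ‖w x₀ - b‖ₑ ^ p ≤ ENNReal.ofReal (4 * R) ^ p * (c ^ p * I) / a :=
        ENNReal.le_div_iff_mul_le (.inl ha0) (.inl ha_top) |>.2 hpow
    _ = _ := by
        have hscale : ENNReal.ofReal (R ^ p) / ENNReal.ofReal (R ^ finrank ℝ E) =
            ENNReal.ofReal (R ^ (p - finrank ℝ E)) := by
          rw [← ENNReal.ofReal_div_of_pos (by positivity), Real.rpow_sub hR, Real.rpow_natCast]
        rw [ha, morreyConst, ← hc_def, ← hscale, ENNReal.ofReal_mul zero_le_four,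
          ENNReal.mul_rpow_of_nonneg _ _ hp0.le, ENNReal.ofReal_rpow_of_pos hR]
        simp only [div_eq_mul_inv]
        rw [ENNReal.mul_inv (.inr measure_ball_lt_top.ne) (.inl ENNReal.ofReal_ne_top)]
        ring

end Morrey

section Dome

open Module

section General

variable {E F G : Type*} [NormedAddCommGroup E] [NormedSpace ℝ E] [NormedAddCommGroup F]
  [NormedSpace ℝ F] [NormedAddCommGroup G] [NormedSpace ℝ G] {V : E → F}

lemma C1OnNhd.comp {A : Set E} {B : Set G} {g : G → E} (hV : C1OnNhd V A) (hg : ContDiff ℝ 1 g)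
    (hgBA : MapsTo g B A) : C1OnNhd (V ∘ g) B :=
  let ⟨O, hO, hAO, hVO⟩ := hV
  ⟨g ⁻¹' O, hO.preimage hg.continuous, hgBA.mono_right hAO, hVO.comp hg.contDiffOn fun _ => id⟩

lemma enorm_fderiv_comp_le {g : G → E} {x : G} {K : NNReal} (hV : DifferentiableAt ℝ V (g x))
    (hg : DifferentiableAt ℝ g x) (hK : LipschitzWith K g) :
    ‖fderiv ℝ (V ∘ g) x‖ₑ ≤ K * ‖fderiv ℝ V (g x)‖ₑ := by
  rw [fderiv_comp x hV hg, mul_comm]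
  have hgK : ‖fderiv ℝ g x‖₊ ≤ K := norm_fderiv_le_of_lipschitz ℝ hK
  calc ‖(fderiv ℝ V (g x)).comp (fderiv ℝ g x)‖ₑ
      ≤ ‖fderiv ℝ V (g x)‖ₑ * ‖fderiv ℝ g x‖ₑ :=
        ENNReal.coe_le_coe.2 (ContinuousLinearMap.opNorm_comp_le _ _)
    _ ≤ ‖fderiv ℝ V (g x)‖ₑ * K := by
        gcongr
        exact ENNReal.coe_le_coe.2 hgK

/-- `V` is a `C^1` map from `A × [0, 1]` to `N` extending `u : A → N`; these are the competitors
for the `C^1` extension energy of `u`. -/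
structure IsC1Extension (N : Set F) (u : E → F) (A : Set E) (V : E × ℝ → F) : Prop where
  c1OnNhd : C1OnNhd V (A ×ˢ Icc 0 1)
  mapsTo : MapsTo V (A ×ˢ Icc 0 1) N
  eq_zero : ∀ x ∈ A, V (x, 0) = u x

namespace IsC1Extension

variable {N : Set F} {u : E → F} {A : Set E} {V : E × ℝ → F}

lemma mono {B : Set E} (hV : IsC1Extension N u A V) (hBA : B ⊆ A) : IsC1Extension N u B V where
  c1OnNhd := hV.c1OnNhd.mono (prod_mono_left hBA)
  mapsTo := hV.mapsTo.mono_left (prod_mono_left hBA)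
  eq_zero x hx := hV.eq_zero x (hBA hx)

lemma comp {B : Set G} {g : G → E} (hV : IsC1Extension N u A V) (hg : ContDiff ℝ 1 g)
    (hgBA : MapsTo g B A) : IsC1Extension N (u ∘ g) B (V ∘ Prod.map g id) where
  c1OnNhd := hV.c1OnNhd.comp (hg.prodMap contDiff_id) (hgBA.prodMap (mapsTo_id _))
  mapsTo := hV.mapsTo.comp (hgBA.prodMap (mapsTo_id _))
  eq_zero x hx := hV.eq_zero (g x) (hgBA hx)

end IsC1Extension

end General

variable {E F : Type*} [NormedAddCommGroup E]

/-- The height at `x` of the dome `{(x, t) | (r - t) ^ 2 = ‖x‖ ^ 2 + ε ^ 2}` of radius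
`√(r ^ 2 - ε ^ 2)`. For fixed `ε`, the domes of different `r` are vertical translates of each
other. -/
def domeHeight (ε r : ℝ) (x : E) : ℝ := r - √(‖x‖ ^ 2 + ε ^ 2)

variable {ε r : ℝ} {x : E}

lemma domeHeight_le : domeHeight ε r x ≤ r := sub_le_self _ (Real.sqrt_nonneg _)

lemma domeHeight_lt (hε : 0 < ε) : domeHeight ε r x < r :=
  sub_lt_self _ (Real.sqrt_pos.2 (by positivity))

lemma domeHeight_nonneg (hε : 0 ≤ ε) (hεr : ε ≤ r) (hx : ‖x‖ ≤ √(r ^ 2 - ε ^ 2)) :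
    0 ≤ domeHeight ε r x := by
  rw [Real.le_sqrt (norm_nonneg x) (sub_nonneg.2 (pow_le_pow_left₀ hε hεr 2)), le_sub_iff_add_le]
    at hx
  exact sub_nonneg.2 (Real.sqrt_le_iff.2 ⟨hε.trans hεr, hx⟩)

lemma domeHeight_pos (hr : 0 < r) (hx : ‖x‖ < √(r ^ 2 - ε ^ 2)) : 0 < domeHeight ε r x := by
  rw [Real.lt_sqrt (norm_nonneg x), lt_sub_iff_add_lt] at hx
  exact sub_pos.2 ((Real.sqrt_lt' hr).2 hx)

lemma domeHeight_eq_zero (hε : 0 ≤ ε) (hεr : ε ≤ r) (hx : ‖x‖ = √(r ^ 2 - ε ^ 2)) :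
    domeHeight ε r x = 0 := by
  rw [domeHeight, hx, Real.sq_sqrt (sub_nonneg.2 (pow_le_pow_left₀ hε hεr 2)), sub_add_cancel,
    Real.sqrt_sq (hε.trans hεr), sub_self]

lemma lipschitzWith_dome [NormedSpace ℝ E] :
    LipschitzWith 1 fun x : E => (x, domeHeight ε r x) := by
  have hnorm : ∀ x : E, √(‖x‖ ^ 2 + ε ^ 2) = ‖WithLp.toLp 2 (x, ε)‖ := fun x => by
    simp [WithLp.prod_norm_eq_of_L2]
  refine (LipschitzWith.id.prodMk (LipschitzWith.of_dist_le_mul (K := 1) fun x y => ?_)).weaken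
    (max_self _).le
  calc dist (domeHeight ε r x) (domeHeight ε r y)
      = |‖WithLp.toLp 2 (x, ε)‖ - ‖WithLp.toLp 2 (y, ε)‖| := by
        rw [domeHeight, domeHeight, dist_sub_left, hnorm, hnorm, Real.dist_eq]
    _ ≤ ‖WithLp.toLp 2 (x, ε) - WithLp.toLp 2 (y, ε)‖ := abs_norm_sub_norm_le _ _
    _ = (1 : NNReal) * dist x y := by
        rw [← WithLp.toLp_sub]
        simp [dist_eq_norm]

variable [InnerProductSpace ℝ E]

lemma contDiff_dome {n : ℕ∞} (hε : 0 < ε) : ContDiff ℝ n fun x : E => (x, domeHeight ε r x) :=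
  contDiff_id.prodMk <| contDiff_const.sub <|
    ((contDiff_norm_sq ℝ).add contDiff_const).sqrt fun x => by positivity

variable [FiniteDimensional ℝ E] [MeasurableSpace E] [BorelSpace E] {μ : Measure E}
  [μ.IsAddHaarMeasure] [NormedAddCommGroup F] [NormedSpace ℝ F] [CompleteSpace F] {N W : Set F}
  {ρ : F → F} {f : C(E, N)} {b : N} {V : E × ℝ → F} {δ p ρ₀ : ℝ}

open ContinuousMap in
-- Restricted to the dome, `V` is a `C^1` map equal to `b` on the boundary sphere, so Morrey's
-- inequality applies to the point where it is `δ`-far from `b`.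
lemma IsSmoothRetractionOn.rpow_le_lintegral_dome [Nontrivial E] (hρ : IsSmoothRetractionOn ρ W N)
    (hp : finrank ℝ E < p) (hδ : 0 < δ) (hδW : ball (b : F) δ ⊆ W) (hε : 0 < ε)
    (hfb : ∀ x, ε ≤ ‖x‖ → f x = b) (hf : ¬ f.HomotopicRel (.const E b) {x | ε ≤ ‖x‖})
    (hεr : 2 * ε ≤ r) (hr : r ≤ 1) (hV : IsC1Extension N (fun x => (f x : F)) (closedBall 0 r) V) :
    ENNReal.ofReal δ ^ p ≤ morreyConst μ p * ENNReal.ofReal (r ^ (p - finrank ℝ E)) *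
      ∫⁻ x in ball 0 √(r ^ 2 - ε ^ 2), ‖fderiv ℝ V (x, domeHeight ε r x)‖ₑ ^ p ∂μ := by
  set R := √(r ^ 2 - ε ^ 2)
  have hε_le : ε ≤ r := by linarith
  have hεR : ε ≤ R := Real.le_sqrt_of_sq_le (by nlinarith)
  have hR : 0 < R := hε.trans_le hεR
  have hRr : R ≤ r := Real.sqrt_le_iff.2 ⟨by linarith, sub_le_self _ (sq_nonneg ε)⟩
  have hfbR : ∀ x, R ≤ ‖x‖ → f x = b := fun x hx => hfb x (hεR.trans hx)
  have hV := hV.mono (closedBall_subset_closedBall hRr)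
  have hheight : MapsTo (domeHeight ε r) (closedBall (0 : E) R) (Icc 0 1) := fun x hx =>
    ⟨domeHeight_nonneg hε.le hε_le (mem_closedBall_zero_iff.1 hx), domeHeight_le.trans hr⟩
  have hheight0 : ∀ x ∈ sphere (0 : E) R, domeHeight ε r x = 0 := fun x hx =>
    domeHeight_eq_zero hε.le hε_le (mem_sphere_zero_iff_norm.1 hx)
  have hdome : ContDiff ℝ 1 fun x : E => (x, domeHeight ε r x) := contDiff_dome (n := 1) hε
  obtain ⟨x₀, hx₀, hfar⟩ := hρ.exists_le_dist_graph hδ hδW hR hfbR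
    (fun h => hf (homotopicRel_const_of_large_norm hε hfb h)) hV.c1OnNhd.continuousOn hV.mapsTo
    hV.eq_zero hdome.snd.continuous.continuousOn hheight hheight0
  have hmem : MapsTo (fun x : E => (x, domeHeight ε r x)) (closedBall 0 R)
    (closedBall 0 R ×ˢ Icc 0 1) := fun x hx => ⟨hx, hheight hx⟩
  have hboundary : ∀ x ∈ sphere (0 : E) R, V (x, domeHeight ε r x) = b := fun x hx => by
    rw [hheight0 x hx, hV.eq_zero x (sphere_subset_closedBall hx),
      hfbR x (mem_sphere_zero_iff_norm.1 hx).ge]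
  have hdp : (1 : ℝ) ≤ finrank ℝ E := Nat.one_le_cast.2 finrank_pos
  have hmorrey := enorm_sub_rpow_le_morreyConst (μ := μ) (by linarith : 1 ≤ p)
    (hV.c1OnNhd.comp hdome hmem) hboundary hx₀
  calc ENNReal.ofReal δ ^ p ≤ ‖V (x₀, domeHeight ε r x₀) - b‖ₑ ^ p := by
        rw [← ofReal_norm, ← dist_eq_norm]
        gcongr
        linarith
    _ ≤ _ := hmorrey
    _ ≤ _ := by
        gcongr _ * ENNReal.ofReal ?_ * ?_
        · exact Real.rpow_le_rpow hR.le hRr (by linarith)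
        refine setLIntegral_mono' measurableSet_ball fun x hx => ?_
        have hderiv := enorm_fderiv_comp_le (g := fun x => (x, domeHeight ε r x))
          ((hV.c1OnNhd.contDiffAt (hmem (ball_subset_closedBall hx))).differentiableAt one_ne_zero)
          (hdome.contDiffAt.differentiableAt one_ne_zero) (lipschitzWith_dome (ε := ε) (r := r))
        rw [ENNReal.coe_one, one_mul] at hderiv
        gcongr
        linarith

lemma lintegral_dome_le {a : ℝ} (hε : 0 < ε) (ha : 0 ≤ a) (hρ₀ : ρ₀ ≤ 1) {G : E × ℝ → ℝ≥0∞}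
    (hG : Measurable G) :
    ∫⁻ r in Ioo a ρ₀, ∫⁻ x in ball (0 : E) √(r ^ 2 - ε ^ 2), G (x, domeHeight ε r x) ∂μ ≤
      ∫⁻ x in ball (0 : E) ρ₀, ∫⁻ t in Ioo (0 : ℝ) 1, G (x, t) ∂volume ∂μ := by
  set G' : E × ℝ → ℝ≥0∞ := (univ ×ˢ Ioo (0 : ℝ) 1).indicator G
  have hG' : Measurable G' := hG.indicator (MeasurableSet.univ.prod measurableSet_Ioo)
  calc ∫⁻ r in Ioo a ρ₀, ∫⁻ x in ball (0 : E) √(r ^ 2 - ε ^ 2), G (x, domeHeight ε r x) ∂μ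
      ≤ ∫⁻ r in Ioo a ρ₀, ∫⁻ x in ball (0 : E) ρ₀, G' (x, domeHeight ε r x) ∂μ := by
        refine setLIntegral_mono' measurableSet_Ioo fun r hr => ?_
        have hr0 : 0 < r := ha.trans_lt hr.1
        have hradius : √(r ^ 2 - ε ^ 2) ≤ ρ₀ :=
          (Real.sqrt_le_iff.2 ⟨hr0.le, sub_le_self _ (sq_nonneg ε)⟩).trans hr.2.le
        refine le_trans ?_ (lintegral_mono_set (ball_subset_ball hradius))
        refine setLIntegral_mono' measurableSet_ball fun x hx => ?_
        have hheight : domeHeight ε r x ∈ Ioo 0 1 :=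
          ⟨domeHeight_pos hr0 (mem_ball_zero_iff.1 hx),
            (domeHeight_lt hε).trans_le (hr.2.le.trans hρ₀)⟩
        exact (indicator_of_mem (s := univ ×ˢ Ioo (0 : ℝ) 1) ⟨mem_univ x, hheight⟩ G).ge
    _ ≤ ∫⁻ r, ∫⁻ x in ball (0 : E) ρ₀, G' (x, domeHeight ε r x) ∂μ := setLIntegral_le_lintegral _ _
    _ = ∫⁻ x in ball (0 : E) ρ₀, ∫⁻ r : ℝ, G' (x, r - √(‖x‖ ^ 2 + ε ^ 2)) ∂volume ∂μ :=
        lintegral_lintegral_swap (hG'.comp (by unfold domeHeight; fun_prop)).aemeasurable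
    _ = ∫⁻ x in ball (0 : E) ρ₀, ∫⁻ t in Ioo (0 : ℝ) 1, G (x, t) ∂volume ∂μ := by
        congr! 2 with x
        rw [lintegral_sub_right_eq_self fun t => G' (x, t), ← lintegral_indicator measurableSet_Ioo]
        refine lintegral_congr fun t => ?_
        by_cases ht : t ∈ Ioo (0 : ℝ) 1
        · rw [indicator_of_mem ht]
          exact indicator_of_mem (s := univ ×ˢ Ioo (0 : ℝ) 1) ⟨mem_univ x, ht⟩ G
        · rw [indicator_of_notMem ht]
          exact indicator_of_notMem (s := univ ×ˢ Ioo (0 : ℝ) 1) (fun h => ht h.2) G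

lemma lintegral_Ioo_inv {a c : ℝ} (ha : 0 < a) (hc : a < c) :
    ∫⁻ r in Ioo a c, ENNReal.ofReal r⁻¹ = ENNReal.ofReal (Real.log (c / a)) := by
  have hint : IntervalIntegrable (fun x : ℝ => x⁻¹) volume a c :=
    intervalIntegral.intervalIntegrable_inv
      (fun x hx => (ha.trans_le (uIcc_of_le hc.le ▸ hx).1).ne') continuousOn_id
  rw [← integral_inv_of_pos ha (ha.trans hc), intervalIntegral.integral_of_le hc.le,
    integral_Ioc_eq_integral_Ioo, ofReal_integral_eq_lintegral_ofReal]
  · exact (intervalIntegrable_iff_integrableOn_Ioo_of_le hc.le).1 hint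
  · filter_upwards [ae_restrict_mem measurableSet_Ioo] with x hx
    exact inv_nonneg.2 (ha.trans hx.1).le

-- In the critical case `p = finrank ℝ E + 1` the dome of radius about `r` costs `1 / r`.
lemma IsSmoothRetractionOn.rpow_mul_log_le_lintegral [Nontrivial E]
    (hρ : IsSmoothRetractionOn ρ W N) (hp : p = finrank ℝ E + 1) (hδ : 0 < δ)
    (hδW : ball (b : F) δ ⊆ W) (hε : 0 < ε) (hfb : ∀ x, ε ≤ ‖x‖ → f x = b)
    (hf : ¬ f.HomotopicRel (.const E b) {x | ε ≤ ‖x‖}) (hερ : 2 * ε < ρ₀) (hρ₀ : ρ₀ ≤ 1)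
    (hV : IsC1Extension N (fun x => (f x : F)) (closedBall 0 ρ₀) V) :
    ENNReal.ofReal δ ^ p * ENNReal.ofReal (Real.log (ρ₀ / (2 * ε))) ≤
      morreyConst μ p *
        ∫⁻ x in ball 0 ρ₀, ∫⁻ t in Ioo (0 : ℝ) 1, ‖fderiv ℝ V (x, t)‖ₑ ^ p ∂volume ∂μ := by
  have hconst : morreyConst μ p ≠ ⊤ := morreyConst_ne_top (by linarith)
  have hmeas : Measurable fun z => ‖fderiv ℝ V z‖ₑ ^ p :=
    (measurable_fderiv ℝ V).enorm.pow_const p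
  calc ENNReal.ofReal δ ^ p * ENNReal.ofReal (Real.log (ρ₀ / (2 * ε)))
      = ∫⁻ r in Ioo (2 * ε) ρ₀, ENNReal.ofReal δ ^ p * ENNReal.ofReal r⁻¹ := by
        rw [lintegral_const_mul _ (by fun_prop), lintegral_Ioo_inv (by linarith) hερ]
    _ ≤ ∫⁻ r in Ioo (2 * ε) ρ₀, morreyConst μ p *
          ∫⁻ x in ball 0 √(r ^ 2 - ε ^ 2), ‖fderiv ℝ V (x, domeHeight ε r x)‖ₑ ^ p ∂μ := by
        refine setLIntegral_mono' measurableSet_Ioo fun r hr => ?_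
        have hr0 : 0 < r := by linarith [hr.1]
        have hdome := hρ.rpow_le_lintegral_dome (μ := μ) (p := p) (by linarith) hδ hδW hε hfb hf
          hr.1.le (hr.2.le.trans hρ₀) (hV.mono (closedBall_subset_closedBall hr.2.le))
        rw [show p - finrank ℝ E = 1 by linarith, Real.rpow_one, mul_right_comm] at hdome
        rw [ENNReal.ofReal_inv_of_pos hr0, ← div_eq_mul_inv]
        exact ENNReal.div_le_of_le_mul hdome
    _ ≤ _ := by
        rw [lintegral_const_mul' _ _ hconst]
        gcongr
        exact lintegral_dome_le hε (by linarith) hρ₀ hmeas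

end Dome

section Gagliardo

open Module

variable {E : Type*} [NormedAddCommGroup E] [MeasurableSpace E]
  {μ : Measure E} {D A p σ : ℝ}

/-- The Gagliardo integrand at displacement `h` of a map that oscillates by at most `D` and is
`A`-Lipschitz is at most `min D (A * ‖h‖) ^ p / ‖h‖ ^ σ`. -/
def gagliardoMajorant (D A p σ : ℝ) (h : E) : ℝ≥0∞ :=
  ENNReal.ofReal (min D (A * ‖h‖) ^ p / ‖h‖ ^ σ)

lemma measurable_gagliardoMajorant [OpensMeasurableSpace E] :
    Measurable (gagliardoMajorant D A p σ : E → ℝ≥0∞) := by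
  unfold gagliardoMajorant
  fun_prop

lemma lintegral_lintegral_sub_le [BorelSpace E] [SecondCountableTopology E] [SFinite μ]
    [μ.IsAddLeftInvariant] [μ.IsNegInvariant] {S B : Set E} (hS : MeasurableSet S)
    {Ψ : E → ℝ≥0∞} (hΨ : Measurable Ψ) {K : E → E → ℝ≥0∞} (hK : ∀ x y, K x y ≤ Ψ (y - x))
    (hK_zero : ∀ x ∉ S, ∀ y ∉ S, K x y = 0) :
    ∫⁻ x in B, ∫⁻ y in B, K x y ∂μ ∂μ ≤ 2 * μ (S ∩ B) * ∫⁻ h, Ψ h ∂μ := by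
  set T : E → ℝ≥0∞ := S.indicator 1
  have hT : Measurable T := measurable_one.indicator hS
  have hK_le : ∀ x y, K x y ≤ T x * Ψ (y - x) + T y * Ψ (y - x) := fun x y => by
    by_cases hx : x ∈ S
    · simpa [T, hx] using (hK x y).trans le_self_add
    by_cases hy : y ∈ S
    · simpa [T, hx, hy] using hK x y
    · simp [hK_zero x hx y hy]
  have hTB : ∀ c, ∫⁻ x in B, T x * c ∂μ = μ (S ∩ B) * c := fun c => by
    rw [lintegral_mul_const _ hT, lintegral_indicator_one hS, Measure.restrict_apply hS]
  have hfst : ∫⁻ x in B, ∫⁻ y in B, T x * Ψ (y - x) ∂μ ∂μ ≤ μ (S ∩ B) * ∫⁻ h, Ψ h ∂μ := by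
    rw [← hTB]
    gcongr with x
    rw [lintegral_const_mul _ (by fun_prop), ← lintegral_sub_right_eq_self Ψ x]
    gcongr
    exact Measure.restrict_le_self
  have hsnd : ∫⁻ x in B, ∫⁻ y in B, T y * Ψ (y - x) ∂μ ∂μ ≤ μ (S ∩ B) * ∫⁻ h, Ψ h ∂μ := by
    rw [lintegral_lintegral_swap (Measurable.aemeasurable (by fun_prop)), ← hTB]
    gcongr with y
    rw [lintegral_const_mul _ (by fun_prop), ← lintegral_sub_left_eq_self Ψ y]
    gcongr
    exact Measure.restrict_le_self
  calc ∫⁻ x in B, ∫⁻ y in B, K x y ∂μ ∂μ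
      ≤ ∫⁻ x in B, ∫⁻ y in B, (T x * Ψ (y - x) + T y * Ψ (y - x)) ∂μ ∂μ := by
        gcongr with x y
        exact hK_le x y
    _ = ∫⁻ x in B, ∫⁻ y in B, T x * Ψ (y - x) ∂μ ∂μ +
          ∫⁻ x in B, ∫⁻ y in B, T y * Ψ (y - x) ∂μ ∂μ := by
        rw [← lintegral_add_left]
        · refine lintegral_congr fun x => lintegral_add_left (by fun_prop) _
        · exact Measurable.lintegral_prod_right (f := fun x y => T x * Ψ (y - x)) (by fun_prop)
    _ ≤ 2 * μ (S ∩ B) * ∫⁻ h, Ψ h ∂μ := by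
        rw [mul_assoc, two_mul]
        exact add_le_add hfst hsnd

section Haar

variable [NormedSpace ℝ E] [FiniteDimensional ℝ E] [BorelSpace E] [μ.IsAddHaarMeasure]

lemma lintegral_gagliardoMajorant_div {ε : ℝ} (hε : 0 < ε) :
    ∫⁻ h, gagliardoMajorant D (A / ε) p σ h ∂μ =
      ENNReal.ofReal (ε ^ (finrank ℝ E - σ)) * ∫⁻ h, gagliardoMajorant D A p σ h ∂μ := by
  have hscale : ∀ h : E, gagliardoMajorant D (A / ε) p σ h =
      ENNReal.ofReal (ε ^ (-σ)) * gagliardoMajorant D A p σ (0 + ε⁻¹ • h) := fun h => by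
    rw [gagliardoMajorant, gagliardoMajorant, ← ENNReal.ofReal_mul (by positivity), zero_add,
      norm_smul, Real.norm_of_nonneg (inv_nonneg.2 hε.le),
      Real.mul_rpow (inv_nonneg.2 hε.le) (norm_nonneg _), Real.inv_rpow hε.le, Real.rpow_neg hε.le,
      ← mul_assoc, ← div_eq_mul_inv]
    congr 1
    field_simp
  have hmeas : Measurable fun h : E => gagliardoMajorant D A p σ (0 + ε⁻¹ • h) :=
    measurable_gagliardoMajorant.comp (by fun_prop)
  simp_rw [hscale]
  rw [lintegral_const_mul _ hmeas,
    lintegral_comp_add_smul measurable_gagliardoMajorant _ (inv_pos.2 hε), ← mul_assoc,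
    ← ENNReal.ofReal_mul (by positivity), inv_pow, inv_inv, ← Real.rpow_natCast,
    ← Real.rpow_add hε, neg_add_eq_sub]

lemma integrableOn_Ioi_of_le_rpow {φ : ℝ → ℝ} (hφ : Measurable φ) {a₀ a₁ C₀ C₁ : ℝ}
    (ha₀ : -1 < a₀) (ha₁ : a₁ < -1) (hφ₀ : ∀ y > 0, ‖φ y‖ ≤ C₀ * y ^ a₀)
    (hφ₁ : ∀ y > 0, ‖φ y‖ ≤ C₁ * y ^ a₁) : IntegrableOn φ (Ioi 0) := by
  have hnear : IntegrableOn φ (Ioo 0 1) :=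
    (((intervalIntegral.integrableOn_Ioo_rpow_iff one_pos).2 ha₀).const_mul C₀).mono'
      hφ.aestronglyMeasurable <| by
        filter_upwards [ae_restrict_mem measurableSet_Ioo] with y hy using hφ₀ y hy.1
  have hfar : IntegrableOn φ (Ici 1) :=
    (integrableOn_Ici_iff_integrableOn_Ioi (by finiteness)).2 <|
      ((integrableOn_Ioi_rpow_of_lt ha₁ one_pos).const_mul C₁).mono'
        hφ.aestronglyMeasurable <| by
          filter_upwards [ae_restrict_mem measurableSet_Ioi] with y hy
            using hφ₁ y (one_pos.trans hy)
  exact Ioo_union_Ici_eq_Ioi (zero_lt_one' ℝ) ▸ hnear.union hfar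

lemma lintegral_gagliardoMajorant_ne_top [Nontrivial E] (hD : 0 ≤ D) (hA : 0 ≤ A) (hp : 0 ≤ p)
    (hσ : finrank ℝ E < σ) (hσp : σ < finrank ℝ E + p) :
    ∫⁻ h, gagliardoMajorant D A p σ h ∂μ ≠ ⊤ := by
  set d := finrank ℝ E
  set φ : ℝ → ℝ := fun y => min D (A * y) ^ p / y ^ σ
  have hd : ((d - 1 : ℕ) : ℝ) = d - 1 := Nat.cast_pred finrank_pos
  have hradial : ∀ y > 0, ‖y ^ (d - 1) • φ y‖ = min D (A * y) ^ p * y ^ (d - 1 - σ) := by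
    intro y hy
    have : 0 ≤ min D (A * y) := le_min hD (by positivity)
    rw [Real.norm_of_nonneg (by positivity), smul_eq_mul, ← Real.rpow_natCast, hd,
      mul_div_left_comm, ← Real.rpow_sub hy]
  have hint : Integrable (fun h : E => φ ‖h‖) μ := by
    rw [integrable_fun_norm_addHaar]
    refine integrableOn_Ioi_of_le_rpow (a₀ := d - 1 - σ + p) (a₁ := d - 1 - σ) (C₀ := A ^ p)
      (C₁ := D ^ p) (by fun_prop) (by linarith) (by linarith) (fun y hy => ?_) (fun y hy => ?_)
    · rw [hradial y hy, add_comm, Real.rpow_add hy, ← mul_assoc, ← Real.mul_rpow hA hy.le]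
      have : 0 ≤ min D (A * y) := le_min hD (by positivity)
      gcongr
      exact min_le_right _ _
    · rw [hradial y hy]
      have : 0 ≤ min D (A * y) := le_min hD (by positivity)
      gcongr
      exact min_le_left _ _
  exact hint.lintegral_lt_top.ne

end Haar

section Euclidean

variable {n ν : ℕ} {s : ℝ} {u : EuclideanSpace ℝ (Fin n) → EuclideanSpace ℝ (Fin ν)}

lemma gagliardoE_le_lintegral_gagliardoMajorant (hp : 0 < p) {b : EuclideanSpace ℝ (Fin ν)}
    {S B : Set (EuclideanSpace ℝ (Fin n))} (hS : MeasurableSet S) (huS : ∀ x ∉ S, u x = b)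
    (hD : ∀ x y, ‖u y - u x‖ ≤ D) (hA : ∀ x y, ‖u y - u x‖ ≤ A * ‖y - x‖) :
    gagliardoE s p B u ≤ 2 * volume (S ∩ B) *
      ∫⁻ h : EuclideanSpace ℝ (Fin n), gagliardoMajorant D A p (n + s * p) h := by
  refine lintegral_lintegral_sub_le hS measurable_gagliardoMajorant (fun x y => ?_)
    fun x hx y hy => ?_
  · unfold gagliardoMajorant
    gcongr
    exact le_min (hD x y) (hA x y)
  · rw [huS x hx, huS y hy, sub_self, norm_zero, Real.zero_rpow hp.ne', zero_div,
      ENNReal.ofReal_zero]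

lemma le_gagliardoE (hp : 0 ≤ p) {κ R : ℝ} (hκ : 0 < κ) (hσ : 0 ≤ n + s * p)
    {S B : Set (EuclideanSpace ℝ (Fin n))} (hS : MeasurableSet S) (hSB : S ⊆ B)
    {T : EuclideanSpace ℝ (Fin n) → Set (EuclideanSpace ℝ (Fin n))} {m : ℝ≥0∞}
    (hT : ∀ x ∈ S, MeasurableSet (T x)) (hTB : ∀ x ∈ S, T x ⊆ B)
    (hm : ∀ x ∈ S, m ≤ volume (T x)) (hu : ∀ x ∈ S, ∀ y ∈ T x, κ ≤ ‖u y - u x‖)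
    (hR : ∀ x ∈ S, ∀ y ∈ T x, ‖y - x‖ ≤ R) :
    ENNReal.ofReal (κ ^ p / R ^ (n + s * p)) * m * volume S ≤ gagliardoE s p B u := by
  rw [← setLIntegral_const]
  refine (setLIntegral_mono' hS fun x hx => ?_).trans (lintegral_mono_set hSB)
  calc ENNReal.ofReal (κ ^ p / R ^ (n + s * p)) * m
      ≤ ∫⁻ _ in T x, ENNReal.ofReal (κ ^ p / R ^ (n + s * p)) := by
        rw [setLIntegral_const]
        gcongr
        exact hm x hx
    _ ≤ ∫⁻ y in T x, ENNReal.ofReal (‖u y - u x‖ ^ p / ‖y - x‖ ^ (n + s * p)) := by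
        refine setLIntegral_mono' (hT x hx) fun y hy => ?_
        have hne : 0 < ‖y - x‖ := norm_pos_iff.2 <| sub_ne_zero.2 fun hyx =>
          hκ.not_ge (by simpa [hyx] using hu x hx y hy)
        gcongr
        exacts [hu x hx y hy, hR x hx y hy]
    _ ≤ ∫⁻ y in B, ENNReal.ofReal (‖u y - u x‖ ^ p / ‖y - x‖ ^ (n + s * p)) :=
        lintegral_mono_set (hTB x hx)

end Euclidean

end Gagliardo

lemma exists_measure_dist_lt_le {X Y : Type*} [MeasurableSpace X] [PseudoMetricSpace Y]
    [SecondCountableTopology Y] [MeasurableSpace Y] [OpensMeasurableSpace Y] {μ : Measure X}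
    [SFinite μ] {ν : Measure Y} [SFinite ν] {g : X → Y} (hg : Measurable g) {A : Set Y}
    (hA_zero : ν A ≠ 0) (hA_top : ν A ≠ ⊤) {ε : ℝ} {M : ℝ≥0∞} (hM : ∀ y, ν (ball y ε) ≤ M) :
    ∃ c ∈ A, μ {z | dist (g z) c < ε} ≤ μ univ * M / ν A := by
  set T : Set (Y × X) := {w | dist (g w.2) w.1 < ε}
  have hT : MeasurableSet T := measurableSet_lt (by fun_prop) measurable_const
  obtain ⟨c, hcA, hc⟩ := exists_le_setLAverage hA_zero hA_top
    (measurable_measure_prodMk_left hT (ν := μ)).aemeasurable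
  refine ⟨c, hcA, hc.trans ?_⟩
  rw [setLAverage_eq]
  gcongr
  calc ∫⁻ c in A, μ (Prod.mk c ⁻¹' T) ∂ν = ∫⁻ z, ν.restrict A ((fun c => (c, z)) ⁻¹' T) ∂μ := by
        rw [← Measure.prod_apply hT, Measure.prod_apply_symm hT]
    _ ≤ ∫⁻ _, M ∂μ := by
        gcongr with z
        exact (Measure.restrict_apply_le _ _).trans
          ((measure_mono fun c hc => mem_ball'.2 hc).trans (hM (g z)))
    _ = μ univ * M := by rw [lintegral_const, mul_comm]

section Slices

open WithLp (toLp ofLp)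

lemma exists_lipschitzWith_of_eq_const {E F : Type*} [NormedAddCommGroup E] [NormedSpace ℝ E]
    [FiniteDimensional ℝ E] [NormedAddCommGroup F] [NormedSpace ℝ F] {g : E → F}
    (hg : ContDiff ℝ 1 g) {R : ℝ} {b : F} (hgb : ∀ z, R ≤ ‖z‖ → g z = b) :
    ∃ K, LipschitzWith K g := by
  have hsupp : HasCompactSupport fun z => g z - b :=
    .intro (isCompact_closedBall 0 R) fun z hz => by
      rw [hgb z (not_le.1 (mem_closedBall_zero_iff.not.1 hz)).le, sub_self]
  obtain ⟨K, hK⟩ := (hg.sub contDiff_const).lipschitzWith_of_hasCompactSupport hsupp one_ne_zero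
  exact ⟨K, fun x y => by simpa only [edist_sub_right] using hK x y⟩

lemma norm_le_norm_fst_add_norm_snd {E F : Type*} [NormedAddCommGroup E] [NormedAddCommGroup F]
    (w : WithLp 2 (E × F)) : ‖w‖ ≤ ‖w.fst‖ + ‖w.snd‖ := by
  rw [WithLp.prod_norm_eq_of_L2, Real.sqrt_le_left (by positivity)]
  nlinarith [norm_nonneg w.fst, norm_nonneg w.snd]

variable {E₁ E₂ E : Type*} [NormedAddCommGroup E₁] [InnerProductSpace ℝ E₁]
  [NormedAddCommGroup E₂] [InnerProductSpace ℝ E₂] [NormedAddCommGroup E] [InnerProductSpace ℝ E]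

lemma exists_linearIsometryEquiv_of_finrank_eq [FiniteDimensional ℝ E₁] [FiniteDimensional ℝ E]
    (h : Module.finrank ℝ E₁ = Module.finrank ℝ E) : Nonempty (E₁ ≃ₗᵢ[ℝ] E) :=
  ⟨(stdOrthonormalBasis ℝ E₁).equiv (stdOrthonormalBasis ℝ E) (finCongr h)⟩

variable (L : WithLp 2 (E₁ × E₂) ≃ₗᵢ[ℝ] E)

lemma norm_map_toLp_le (x : E₁) (y : E₂) : ‖L (toLp 2 (x, y))‖ ≤ ‖x‖ + ‖y‖ := by
  rw [L.norm_map]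
  exact norm_le_norm_fst_add_norm_snd _

lemma lipschitzWith_slice (c : E₁) (y : E₂) : LipschitzWith 1 fun x => L (toLp 2 (c + x, y)) := by
  refine LipschitzWith.of_dist_le_mul fun x x' => ?_
  rw [L.dist_map, dist_eq_norm, ← WithLp.toLp_sub]
  simp [dist_eq_norm]

lemma contDiff_slice {n : ℕ∞} (c : E₁) (y : E₂) :
    ContDiff ℝ n fun x => L (toLp 2 (c + x, y)) :=
  (L.contDiff.comp (WithLp.prodContinuousLinearEquiv 2 ℝ E₁ E₂).symm.contDiff).comp
    ((contDiff_const.add contDiff_id).prodMk contDiff_const)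

section Measure

variable [FiniteDimensional ℝ E₁] [MeasurableSpace E₁] [BorelSpace E₁] [FiniteDimensional ℝ E₂]
  [MeasurableSpace E₂] [BorelSpace E₂] [FiniteDimensional ℝ E] [MeasurableSpace E] [BorelSpace E]

lemma measurePreserving_map_toLp : MeasurePreserving fun w : E₁ × E₂ => L (toLp 2 w) :=
  L.measurePreserving.comp (WithLp.volume_preserving_toLp E₁ E₂)

lemma measurePreserving_ofLp_symm : MeasurePreserving fun z => ofLp (L.symm z) :=
  (WithLp.volume_preserving_ofLp E₁ E₂).comp L.symm.measurePreserving

lemma lintegral_eq_lintegral_slice {G : E → ℝ≥0∞} (hG : Measurable G) :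
    ∫⁻ z, G z = ∫⁻ y, ∫⁻ x, G (L (toLp 2 (x, y))) := by
  rw [← (measurePreserving_map_toLp L).lintegral_comp hG]
  exact lintegral_prod_symm' _ (hG.comp (measurePreserving_map_toLp L).measurable)

lemma setLIntegral_slice_le {G : E → ℝ≥0∞} (hG : Measurable G) {A₁ : Set E₁} {A₂ : Set E₂}
    {B : Set E} (hA₁ : MeasurableSet A₁) (hA₂ : MeasurableSet A₂) (hB : MeasurableSet B) {c : E₁}
    (hAB : ∀ y ∈ A₂, ∀ x ∈ A₁, L (toLp 2 (c + x, y)) ∈ B) :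
    ∫⁻ y in A₂, ∫⁻ x in A₁, G (L (toLp 2 (c + x, y))) ≤ ∫⁻ z in B, G z := by
  rw [← lintegral_indicator hB, lintegral_eq_lintegral_slice L (hG.indicator hB)]
  refine (setLIntegral_mono' hA₂ fun y hy => ?_).trans (setLIntegral_le_lintegral A₂ _)
  rw [← lintegral_add_left_eq_self (fun x => B.indicator G (L (toLp 2 (x, y)))) c]
  refine (setLIntegral_mono' hA₁ fun x hx => ?_).trans (setLIntegral_le_lintegral A₁ _)
  rw [indicator_of_mem (hAB y hy x hx)]

lemma volume_preimage_prod {A₁ : Set E₁} {A₂ : Set E₂} (hA₁ : MeasurableSet A₁)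
    (hA₂ : MeasurableSet A₂) :
    volume ((fun z => ofLp (L.symm z)) ⁻¹' A₁ ×ˢ A₂) = volume A₁ * volume A₂ := by
  rw [(measurePreserving_ofLp_symm L).measure_preimage (hA₁.prod hA₂).nullMeasurableSet,
    Measure.volume_eq_prod, Measure.prod_prod]

end Measure

/-- The first component of the orthogonal splitting `L` near the origin, cut off so as to be equal
to `e` outside a ball. -/
def cutoffFst (e : E₁) (z : E) : E₁ :=
  (⟨1 / 2, 3 / 4, by norm_num, by norm_num⟩ : ContDiffBump (0 : E)) z • ((L.symm z).fst - e) + e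

variable {L} {e : E₁} {z : E}

lemma cutoffFst_of_norm_le (hz : ‖z‖ ≤ 1 / 2) : cutoffFst L e z = (L.symm z).fst := by
  rw [cutoffFst, ContDiffBump.one_of_mem_closedBall _ (mem_closedBall_zero_iff.2 hz), one_smul,
    sub_add_cancel]

lemma cutoffFst_of_le_norm (hz : 3 / 4 ≤ ‖z‖) : cutoffFst L e z = e := by
  rw [cutoffFst, ContDiffBump.zero_of_le_dist _ (by rwa [dist_zero_right]), zero_smul, zero_add]

lemma contDiff_cutoffFst {n : ℕ∞} : ContDiff ℝ n (cutoffFst L e) :=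
  (ContDiffBump.contDiff _).smul
    (((WithLp.fstL 2 ℝ E₁ E₂).contDiff.comp L.symm.contDiff).sub contDiff_const)
    |>.add contDiff_const

end Slices

section Bubble

open Module
open WithLp (toLp ofLp)

variable {E₁ E₂ E F : Type*} [NormedAddCommGroup E₁] [InnerProductSpace ℝ E₁]
  [NormedAddCommGroup E₂] [InnerProductSpace ℝ E₂] [NormedAddCommGroup E] [InnerProductSpace ℝ E]

/-- The map that on each slice `{x₂ = y}` near the origin, in the splitting `L`, is a copy of `f`
concentrated at scale `ε` about `c`. When `f` is constant outside the unit ball and `e` is away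
from `c`, it is constant near the unit sphere. -/
def bubble (L : WithLp 2 (E₁ × E₂) ≃ₗᵢ[ℝ] E) (f : E₁ → F) (e c : E₁) (ε : ℝ) (z : E) : F :=
  f (ε⁻¹ • (cutoffFst L e z - c))

variable {L : WithLp 2 (E₁ × E₂) ≃ₗᵢ[ℝ] E} {f : E₁ → F} {e c : E₁} {ε : ℝ} {z : E} {b : F}

lemma bubble_of_norm_le (hz : ‖z‖ ≤ 1 / 2) :
    bubble L f e c ε z = f (ε⁻¹ • ((L.symm z).fst - c)) := by
  rw [bubble, cutoffFst_of_norm_le hz]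

lemma one_le_norm_inv_smul {x : E₁} (hε : 0 < ε) (hx : ε ≤ ‖x‖) : 1 ≤ ‖ε⁻¹ • x‖ := by
  rwa [norm_smul, norm_inv, Real.norm_of_nonneg hε.le, inv_mul_eq_div, one_le_div hε]

lemma bubble_of_le_norm (hfb : ∀ x, 1 ≤ ‖x‖ → f x = b) (hε : 0 < ε) (hc : ‖c‖ + ε ≤ ‖e‖)
    (hz : 3 / 4 ≤ ‖z‖) : bubble L f e c ε z = b := by
  rw [bubble, cutoffFst_of_le_norm hz]
  exact hfb _ (one_le_norm_inv_smul hε (by linarith [norm_sub_norm_le e c]))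

lemma contDiff_bubble [NormedAddCommGroup F] [NormedSpace ℝ F] {n : ℕ∞} (hf : ContDiff ℝ n f) :
    ContDiff ℝ n (bubble L f e c ε) :=
  hf.comp ((contDiff_cutoffFst.sub contDiff_const).const_smul _)

section Gagliardo

variable {n ν : ℕ} {s p : ℝ}
  {L : WithLp 2 (E₁ × E₂) ≃ₗᵢ[ℝ] EuclideanSpace ℝ (Fin n)} {f : E₁ → EuclideanSpace ℝ (Fin ν)}
  {b : EuclideanSpace ℝ (Fin ν)}

lemma gagliardoE_bubble_le {Kf K : NNReal} (hKf : LipschitzWith Kf f)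
    (hK : LipschitzWith K (cutoffFst L e)) (hp : 0 < p) (hfb : ∀ x, 1 ≤ ‖x‖ → f x = b) {D : ℝ}
    (hD : ∀ x y, ‖f y - f x‖ ≤ D) (hε : 0 < ε) {B : Set (EuclideanSpace ℝ (Fin n))} :
    gagliardoE s p B (bubble L f e c ε) ≤ 2 * volume ({z | dist (cutoffFst L e z) c < ε} ∩ B) *
      (ENNReal.ofReal (ε ^ (-(s * p))) *
        ∫⁻ h : EuclideanSpace ℝ (Fin n), gagliardoMajorant D (Kf * K) p (n + s * p) h) := by
  have hS : MeasurableSet {z | dist (cutoffFst L e z) c < ε} :=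
    (isOpen_lt (hK.continuous.dist continuous_const) continuous_const).measurableSet
  have hLip : ∀ x y, ‖bubble L f e c ε y - bubble L f e c ε x‖ ≤ Kf * K / ε * ‖y - x‖ := fun x y =>
    calc ‖bubble L f e c ε y - bubble L f e c ε x‖
        ≤ Kf * ‖ε⁻¹ • (cutoffFst L e y - c) - ε⁻¹ • (cutoffFst L e x - c)‖ := hKf.norm_sub_le _ _
      _ = Kf * (ε⁻¹ * ‖cutoffFst L e y - cutoffFst L e x‖) := by
        rw [← smul_sub, sub_sub_sub_cancel_right, norm_smul, norm_inv, Real.norm_of_nonneg hε.le]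
      _ ≤ Kf * (ε⁻¹ * (K * ‖y - x‖)) := by
        gcongr
        exact hK.norm_sub_le _ _
      _ = Kf * K / ε * ‖y - x‖ := by ring
  have hle := gagliardoE_le_lintegral_gagliardoMajorant (B := B) (s := s) hp hS
    (fun z hz => hfb _ (one_le_norm_inv_smul hε (dist_eq_norm (cutoffFst L e z) c ▸ not_lt.1 hz)))
    (fun _ _ => hD _ _) hLip
  rwa [lintegral_gagliardoMajorant_div hε, finrank_euclideanSpace_fin, sub_add_cancel_left] at hle

lemma exists_gagliardoE_bubble_le [FiniteDimensional ℝ E₁] [MeasurableSpace E₁] [BorelSpace E₁]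
    [Nontrivial E₁] (hs : s * p = finrank ℝ E₁) (hp : finrank ℝ E₁ < p) (hf : ContDiff ℝ 1 f)
    (hfb : ∀ x, 1 ≤ ‖x‖ → f x = b) {D : ℝ} (hD : ∀ x y, ‖f y - f x‖ ≤ D) {r : ℝ} (hr : 0 < r) :
    ∃ C : ℝ≥0∞, C ≠ ⊤ ∧
      ∀ ε > 0, ∃ c ∈ ball 0 r, gagliardoE s p (ball 0 1) (bubble L f e c ε) ≤ C := by
  have hp₀ : 0 < p := (Nat.cast_nonneg _).trans_lt hp
  have : Nontrivial (EuclideanSpace ℝ (Fin n)) := L.toEquiv.symm.nontrivial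
  obtain ⟨Kf, hKf⟩ := exists_lipschitzWith_of_eq_const hf hfb
  obtain ⟨K, hK⟩ := exists_lipschitzWith_of_eq_const (contDiff_cutoffFst (n := 1) (L := L) (e := e))
    fun z => cutoffFst_of_le_norm
  set I := ∫⁻ h : EuclideanSpace ℝ (Fin n), gagliardoMajorant D (Kf * K) p (n + s * p) h
  have hI : I ≠ ⊤ := lintegral_gagliardoMajorant_ne_top ((norm_nonneg _).trans (hD 0 0))
    (by positivity) hp₀.le (by simp [hs, finrank_pos]) (by simpa [hs] using hp)
  set ω := volume (ball (0 : EuclideanSpace ℝ (Fin n)) 1)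
  have hr_ne : volume (ball (0 : E₁) r) ≠ 0 := (measure_ball_pos _ _ hr).ne'
  refine ⟨2 * (ω * volume (ball (0 : E₁) 1) / volume (ball (0 : E₁) r)) * I, by finiteness,
    fun ε hε => ?_⟩
  obtain ⟨c, hc, hcS⟩ := exists_measure_dist_lt_le (μ := volume.restrict (ball 0 1))
    hK.continuous.measurable hr_ne measure_ball_lt_top.ne fun y =>
      (Measure.addHaar_ball_of_pos volume y hε).le
  rw [Measure.restrict_apply
    (isOpen_lt (hK.continuous.dist continuous_const) continuous_const).measurableSet,
    Measure.restrict_apply_univ] at hcS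
  have hcancel : ENNReal.ofReal (ε ^ finrank ℝ E₁) * ENNReal.ofReal (ε ^ (-(s * p))) = 1 := by
    rw [← ENNReal.ofReal_mul (by positivity), ← Real.rpow_natCast, ← Real.rpow_add hε, hs]
    simp
  refine ⟨c, hc, (gagliardoE_bubble_le hKf hK hp₀ hfb hD hε).trans ?_⟩
  calc 2 * volume ({z | dist (cutoffFst L e z) c < ε} ∩ ball 0 1) *
        (ENNReal.ofReal (ε ^ (-(s * p))) * I)
      ≤ 2 * (ω * (ENNReal.ofReal (ε ^ finrank ℝ E₁) * volume (ball (0 : E₁) 1)) /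
          volume (ball (0 : E₁) r)) * (ENNReal.ofReal (ε ^ (-(s * p))) * I) := by gcongr
    _ = 2 * (ω * volume (ball (0 : E₁) 1) / volume (ball (0 : E₁) r)) * I *
          (ENNReal.ofReal (ε ^ finrank ℝ E₁) * ENNReal.ofReal (ε ^ (-(s * p)))) := by
        simp only [div_eq_mul_inv]
        ring
    _ = 2 * (ω * volume (ball (0 : E₁) 1) / volume (ball (0 : E₁) r)) * I := by
        rw [hcancel, mul_one]

lemma le_norm_bubble_sub {a : ℝ} {x y : EuclideanSpace ℝ (Fin n)}
    (hfb : ∀ x, 1 ≤ ‖x‖ → f x = b) (hε : 0 < ε) (hx : ‖x‖ ≤ 1 / 2) (hy : ‖y‖ ≤ 1 / 2)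
    (hxa : a ≤ ‖f (ε⁻¹ • ((L.symm x).fst - c)) - b‖) (hyc : ε ≤ ‖(L.symm y).fst - c‖) :
    a ≤ ‖bubble L f e c ε y - bubble L f e c ε x‖ := by
  rwa [bubble_of_norm_le hx, bubble_of_norm_le hy, hfb _ (one_le_norm_inv_smul hε hyc),
    norm_sub_rev]

lemma norm_lt_of_mem_slab {x : EuclideanSpace ℝ (Fin n)} (hε_le : ε ≤ 1 / 16) (hc : ‖c‖ ≤ 1 / 8)
    (hx₁ : ‖(L.symm x).fst - c‖ < ε) (hx₂ : ‖(L.symm x).snd‖ < 1 / 8) : ‖x‖ < 1 / 2 := by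
  rw [← L.symm.norm_map x]
  linarith [norm_le_norm_fst_add_norm_snd (L.symm x), norm_le_norm_add_norm_sub' (L.symm x).fst c]

lemma norm_lt_of_mem_translate {w : E₁} {x y : EuclideanSpace ℝ (Fin n)} (hw : ‖w‖ = 2 * ε)
    (hε_le : ε ≤ 1 / 16) (hc : ‖c‖ ≤ 1 / 8) (hx₁ : ‖(L.symm x).fst - c‖ < ε)
    (hx₂ : ‖(L.symm x).snd‖ < 1 / 8) (hy₁ : ‖(L.symm y).fst - (c + w)‖ < ε)
    (hy₂ : ‖(L.symm y).snd - (L.symm x).snd‖ < ε) :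
    ‖x‖ < 1 / 2 ∧ ‖y‖ < 1 / 2 ∧ ε ≤ ‖(L.symm y).fst - c‖ ∧ ‖y - x‖ ≤ 5 * ε := by
  refine ⟨norm_lt_of_mem_slab hε_le hc hx₁ hx₂, ?_, ?_, ?_⟩
  · rw [← L.symm.norm_map y]
    linarith [norm_le_norm_fst_add_norm_snd (L.symm y), norm_add_le c w,
      norm_le_norm_add_norm_sub' (L.symm y).fst (c + w),
      norm_le_norm_add_norm_sub' (L.symm y).snd (L.symm x).snd]
  · have h := norm_sub_le ((L.symm y).fst - c) ((L.symm y).fst - (c + w))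
    rw [sub_sub_sub_cancel_left, add_sub_cancel_left, hw] at h
    linarith
  · have h : ‖(L.symm y).fst - (L.symm x).fst‖ ≤
        ‖(L.symm y).fst - (c + w)‖ + ‖w‖ + ‖(L.symm x).fst - c‖ :=
      calc ‖(L.symm y).fst - (L.symm x).fst‖
          = ‖(L.symm y).fst - (c + w) + w - ((L.symm x).fst - c)‖ := by congr 1; abel
        _ ≤ _ := (norm_sub_le _ _).trans (by gcongr; exact norm_add_le _ _)
    have hyx := norm_le_norm_fst_add_norm_snd (L.symm (y - x))
    rw [L.symm.norm_map, map_sub, WithLp.sub_fst, WithLp.sub_snd] at hyx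
    linarith

variable [FiniteDimensional ℝ E₁] [MeasurableSpace E₁] [BorelSpace E₁] [FiniteDimensional ℝ E₂]
  [MeasurableSpace E₂] [BorelSpace E₂]

-- Near the origin the bubble is far from `b` on a set of slices of size `ε`, and equals `b` on
-- their translate by `2 * ε` along the slices.
lemma ofReal_mul_le_gagliardoE_bubble [Nontrivial E₁] (hp : 0 ≤ p) (hσ : 0 ≤ n + s * p) {a : ℝ}
    (ha : 0 < a) (hf : Continuous f) (hfb : ∀ x, 1 ≤ ‖x‖ → f x = b) (hε : 0 < ε)
    (hε_le : ε ≤ 1 / 16) (hc : ‖c‖ ≤ 1 / 8) :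
    ENNReal.ofReal (a ^ p / (5 * ε) ^ (n + s * p)) *
      (volume (ball (0 : E₁) ε) * volume (ball (0 : E₂) ε)) *
      (volume {x | a < ‖f (ε⁻¹ • (x - c)) - b‖} * volume (ball (0 : E₂) (1 / 8))) ≤
      gagliardoE s p (ball 0 1) (bubble L f e c ε) := by
  obtain ⟨w, hw⟩ := exists_norm_eq E₁ (by positivity : 0 ≤ 2 * ε)
  set S₁ := {x | a < ‖f (ε⁻¹ • (x - c)) - b‖} with hS₁
  have hS₁_meas : MeasurableSet S₁ := (isOpen_lt continuous_const (by fun_prop)).measurableSet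
  have hS₁_norm : ∀ x ∈ S₁, ‖x - c‖ < ε := fun x hx => by
    by_contra! hxc
    rw [hS₁, mem_ofPred, hfb _ (one_le_norm_inv_smul hε hxc), sub_self, norm_zero] at hx
    exact ha.not_gt hx
  set S := (fun z => ofLp (L.symm z)) ⁻¹' S₁ ×ˢ ball 0 (1 / 8)
  set T : EuclideanSpace ℝ (Fin n) → Set (EuclideanSpace ℝ (Fin n)) := fun x =>
    (fun z => ofLp (L.symm z)) ⁻¹' ball (c + w) ε ×ˢ ball (L.symm x).snd ε
  have hS : ∀ x ∈ S, ‖(L.symm x).fst - c‖ < ε ∧ ‖(L.symm x).snd‖ < 1 / 8 := fun x hx =>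
    ⟨hS₁_norm _ hx.1, mem_ball_zero_iff.1 hx.2⟩
  have hT : ∀ x ∈ S, ∀ y ∈ T x, ‖x‖ < 1 / 2 ∧ ‖y‖ < 1 / 2 ∧ ε ≤ ‖(L.symm y).fst - c‖ ∧
      ‖y - x‖ ≤ 5 * ε := fun x hx y hy =>
    norm_lt_of_mem_translate hw hε_le hc (hS x hx).1 (hS x hx).2 (mem_ball_iff_norm.1 hy.1)
      (mem_ball_iff_norm.1 hy.2)
  have hS_meas : MeasurableSet S :=
    (measurePreserving_ofLp_symm L).measurable (hS₁_meas.prod measurableSet_ball)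
  have hT_volume : ∀ x ∈ S, volume (ball (0 : E₁) ε) * volume (ball (0 : E₂) ε) ≤ volume (T x) :=
    fun x _ => by
      rw [volume_preimage_prod L measurableSet_ball measurableSet_ball,
        Measure.addHaar_ball_center volume (c + w),
        Measure.addHaar_ball_center volume (L.symm x).snd]
  rw [← volume_preimage_prod L hS₁_meas measurableSet_ball]
  exact le_gagliardoE hp ha hσ hS_meas
    (fun x hx => mem_ball_zero_iff.2 <| by
      linarith [norm_lt_of_mem_slab hε_le hc (hS x hx).1 (hS x hx).2])
    (fun x _ => (measurePreserving_ofLp_symm L).measurable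
      (measurableSet_ball.prod measurableSet_ball))
    (fun x hx y hy => mem_ball_zero_iff.2 <| by linarith [(hT x hx y hy).2.1]) hT_volume
    (fun x hx y hy => le_norm_bubble_sub hfb hε (hT x hx y hy).1.le (hT x hx y hy).2.1.le
      hx.1.le (hT x hx y hy).2.2.1)
    (fun x hx y hy => (hT x hx y hy).2.2.2)

lemma volume_setOf_comp_inv_smul_sub (hε : 0 < ε) (P : E₁ → Prop) :
    volume {x | P (ε⁻¹ • (x - c))} = ENNReal.ofReal (ε ^ finrank ℝ E₁) * volume {x | P x} := by
  have hpre : {x | P (ε⁻¹ • (x - c))} =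
      (fun x => x + -c) ⁻¹' ((fun x => ε⁻¹ • x) ⁻¹' {x | P x}) := by
    simp only [preimage_ofPred_eq, sub_eq_add_neg]
  rw [hpre, measure_preimage_add_right, Measure.addHaar_preimage_smul _ (inv_ne_zero hε.ne'),
    inv_pow, inv_inv, abs_of_pos (by positivity)]

lemma exists_le_gagliardoE_bubble [Nontrivial E₁] (hp : 0 ≤ p) (hs : s * p = finrank ℝ E₁)
    (hf : Continuous f) (hfb : ∀ x, 1 ≤ ‖x‖ → f x = b) (hf_ne : ∃ x, f x ≠ b) :
    ∃ k : ℝ≥0∞, k ≠ 0 ∧ ∀ (c : E₁) (ε : ℝ), ‖c‖ ≤ 1 / 8 → 0 < ε → ε ≤ 1 / 16 →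
      k ≤ gagliardoE s p (ball 0 1) (bubble L f e c ε) := by
  obtain ⟨ζ, hζ⟩ := hf_ne
  obtain ⟨a, ha, haζ⟩ := exists_between (norm_pos_iff.2 (sub_ne_zero.2 hζ))
  have hn : n = finrank ℝ E₁ + finrank ℝ E₂ := by
    rw [← finrank_prod, ← (WithLp.linearEquiv 2 ℝ (E₁ × E₂)).finrank_eq,
      L.toLinearEquiv.finrank_eq, finrank_euclideanSpace_fin]
  have hO : volume {x | a < ‖f x - b‖} ≠ 0 :=
    ((isOpen_lt continuous_const (by fun_prop)).measure_pos volume ⟨ζ, mem_ofPred.2 haζ⟩).ne'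
  refine ⟨ENNReal.ofReal (a ^ p / 5 ^ (n + s * p)) *
    (volume (ball (0 : E₁) 1) * volume (ball (0 : E₂) 1)) *
    (volume {x | a < ‖f x - b‖} * volume (ball (0 : E₂) (1 / 8))), ?_,
    fun c ε hc hε hε_le => ?_⟩
  · have hpos : 0 < a ^ p / (5 : ℝ) ^ (n + s * p) := by positivity
    simp [hO, hpos, (measure_ball_pos volume _ _).ne']
  refine le_of_eq_of_le ?_
    (ofReal_mul_le_gagliardoE_bubble hp (by rw [hs]; positivity) ha hf hfb hε hε_le hc)
  rw [volume_setOf_comp_inv_smul_sub hε fun x => a < ‖f x - b‖,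
    Measure.addHaar_ball_of_pos _ _ hε, Measure.addHaar_ball_of_pos _ _ hε]
  have hscale : a ^ p / 5 ^ (n + s * p) = a ^ p / (5 * ε) ^ (n + s * p) *
      ε ^ finrank ℝ E₁ * ε ^ finrank ℝ E₂ * ε ^ finrank ℝ E₁ := by
    rw [Real.mul_rpow (by norm_num) hε.le, Real.rpow_add hε, hs, Real.rpow_natCast,
      Real.rpow_natCast, hn, pow_add]
    field_simp
  rw [hscale, ENNReal.ofReal_mul (by positivity), ENNReal.ofReal_mul (by positivity),
    ENNReal.ofReal_mul (by positivity)]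
  ring

end Gagliardo

end Bubble

section Extension

open Module
open WithLp (toLp ofLp)

namespace IsC1Extension

variable {E F G : Type*} [NormedAddCommGroup E] [NormedSpace ℝ E] [NormedAddCommGroup F]
  [NormedSpace ℝ F] [NormedAddCommGroup G] [NormedSpace ℝ G] {N : Set F} {u v : E → F} {A : Set E}
  {V : E × ℝ → F}

lemma congr (hV : IsC1Extension N u A V) (huv : EqOn u v A) : IsC1Extension N v A V where
  c1OnNhd := hV.c1OnNhd
  mapsTo := hV.mapsTo
  eq_zero x hx := (hV.eq_zero x hx).trans (huv hx)

lemma setLIntegral_comp_le [MeasurableSpace G] {μ : Measure G} {p : ℝ} (hp : 0 ≤ p)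
    (hV : IsC1Extension N u A V) {g : G → E} (hg : ContDiff ℝ 1 g) (hg_lip : LipschitzWith 1 g)
    {B : Set G} (hB : MeasurableSet B) (hBA : MapsTo g B A) :
    ∫⁻ x in B, ∫⁻ t in Ioo (0 : ℝ) 1, ‖fderiv ℝ (V ∘ Prod.map g id) (x, t)‖ₑ ^ p ∂volume ∂μ ≤
      ∫⁻ x in B, ∫⁻ t in Ioo (0 : ℝ) 1, ‖fderiv ℝ V (g x, t)‖ₑ ^ p ∂volume ∂μ := by
  have hlip : LipschitzWith 1 (Prod.map g (id : ℝ → ℝ)) := by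
    simpa [Prod.map_def] using (hg_lip.comp LipschitzWith.prod_fst).prodMk LipschitzWith.prod_snd
  refine setLIntegral_mono' hB fun x hx => setLIntegral_mono' measurableSet_Ioo fun t ht => ?_
  have hVx := hV.c1OnNhd.contDiffAt (mk_mem_prod (hBA hx) (Ioo_subset_Icc_self ht))
  gcongr
  simpa using enorm_fderiv_comp_le (g := Prod.map g id) (x := (x, t))
    (hVx.differentiableAt one_ne_zero) ((hg.prodMap contDiff_id).differentiable one_ne_zero _) hlip

end IsC1Extension

section Slice

variable {E₁ E₂ E F : Type*} [NormedAddCommGroup E₁] [InnerProductSpace ℝ E₁]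
  [FiniteDimensional ℝ E₁] [MeasurableSpace E₁] [BorelSpace E₁] [Nontrivial E₁]
  [NormedAddCommGroup E₂] [InnerProductSpace ℝ E₂] [FiniteDimensional ℝ E₂] [MeasurableSpace E₂]
  [BorelSpace E₂] [NormedAddCommGroup E] [InnerProductSpace ℝ E] [FiniteDimensional ℝ E]
  [MeasurableSpace E] [BorelSpace E] [NormedAddCommGroup F] [NormedSpace ℝ F] [CompleteSpace F]
  {N W : Set F} {ρ : F → F} {b : N} {f : C(E₁, N)} {u : E → F} {V : E × ℝ → F} {p δ ε ρ₀ : ℝ}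

lemma IsSmoothRetractionOn.rpow_mul_log_mul_volume_le_lintegral (hρ : IsSmoothRetractionOn ρ W N)
    (hp : p = finrank ℝ E₁ + 1) (hδ : 0 < δ) (hδW : ball (b : F) δ ⊆ W) (hε : 0 < ε)
    (hfb : ∀ x, ε ≤ ‖x‖ → f x = b) (hf : ¬ f.HomotopicRel (.const E₁ b) {x | ε ≤ ‖x‖})
    (hερ : 2 * ε < ρ₀) (hρ₀ : ρ₀ ≤ 1) (L : WithLp 2 (E₁ × E₂) ≃ₗᵢ[ℝ] E) {c : E₁} {A : Set E₂}
    {B : Set E} (hA : MeasurableSet A) (hB : MeasurableSet B)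
    (hAB : ∀ y ∈ A, ∀ x ∈ closedBall 0 ρ₀, L (toLp 2 (c + x, y)) ∈ B)
    (hu : ∀ y ∈ A, ∀ x ∈ closedBall 0 ρ₀, u (L (toLp 2 (c + x, y))) = f x)
    (hV : IsC1Extension N u B V) :
    ENNReal.ofReal δ ^ p * ENNReal.ofReal (Real.log (ρ₀ / (2 * ε))) * volume A ≤
      morreyConst (volume : Measure E₁) p *
        ∫⁻ z in B, ∫⁻ t in Ioo (0 : ℝ) 1, ‖fderiv ℝ V (z, t)‖ₑ ^ p := by
  have hp₀ : 0 ≤ p := by rw [hp]; positivity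
  have hconst : morreyConst (volume : Measure E₁) p ≠ ⊤ := morreyConst_ne_top (by linarith)
  have hmeas : Measurable fun z => ∫⁻ t in Ioo (0 : ℝ) 1, ‖fderiv ℝ V (z, t)‖ₑ ^ p :=
    ((measurable_fderiv ℝ V).enorm.pow_const p).lintegral_prod_right'
  have hslice : ∀ y ∈ A, ENNReal.ofReal δ ^ p * ENNReal.ofReal (Real.log (ρ₀ / (2 * ε))) ≤
      morreyConst volume p * ∫⁻ x in ball (0 : E₁) ρ₀, ∫⁻ t in Ioo (0 : ℝ) 1,
        ‖fderiv ℝ V (L (toLp 2 (c + x, y)), t)‖ₑ ^ p := fun y hy => by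
    refine (hρ.rpow_mul_log_le_lintegral (μ := volume) hp hδ hδW hε hfb hf hερ hρ₀
      ((hV.comp (contDiff_slice L c y) (hAB y hy)).congr (hu y hy))).trans (mul_le_mul_right ?_ _)
    exact hV.setLIntegral_comp_le hp₀ (contDiff_slice L c y) (lipschitzWith_slice L c y)
      measurableSet_ball fun x hx => hAB y hy x (ball_subset_closedBall hx)
  calc ENNReal.ofReal δ ^ p * ENNReal.ofReal (Real.log (ρ₀ / (2 * ε))) * volume A
      = ∫⁻ _ in A, ENNReal.ofReal δ ^ p * ENNReal.ofReal (Real.log (ρ₀ / (2 * ε))) :=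
        (setLIntegral_const _ _).symm
    _ ≤ ∫⁻ y in A, morreyConst volume p * ∫⁻ x in ball (0 : E₁) ρ₀, ∫⁻ t in Ioo (0 : ℝ) 1,
          ‖fderiv ℝ V (L (toLp 2 (c + x, y)), t)‖ₑ ^ p := setLIntegral_mono' hA hslice
    _ ≤ _ := by
        rw [lintegral_const_mul' _ _ hconst]
        gcongr
        exact setLIntegral_slice_le L hmeas measurableSet_ball hA hB
          fun y hy x hx => hAB y hy x (ball_subset_closedBall hx)

end Slice

variable {n ν : ℕ} {p : ℝ} {N : Set (EuclideanSpace ℝ (Fin ν))}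

lemma le_extEnergy (hp : 0 ≤ p) {u : EuclideanSpace ℝ (Fin n) → EuclideanSpace ℝ (Fin ν)}
    {a : ℝ≥0∞} (h : ∀ V, IsC1Extension N u (closedBall 0 1) V →
      a ≤ ∫⁻ x in ball 0 1, ∫⁻ t in Ioo (0 : ℝ) 1, ‖fderiv ℝ V (x, t)‖ₑ ^ p) :
    a ≤ extEnergy p N u := by
  refine le_sInf ?_
  rintro _ ⟨V, hVc1, hVN, hVu, rfl⟩
  have henorm : ∀ z, ENNReal.ofReal (‖fderiv ℝ V z‖ ^ p) = ‖fderiv ℝ V z‖ₑ ^ p := fun z => by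
    rw [← ENNReal.ofReal_rpow_of_nonneg (norm_nonneg _) hp, ofReal_norm]
  have hmeas : Measurable fun z => ‖fderiv ℝ V z‖ₑ ^ p :=
    (measurable_fderiv ℝ V).enorm.pow_const p
  simp only [henorm]
  rw [Measure.volume_eq_prod, ← Measure.prod_restrict, lintegral_prod _ hmeas.aemeasurable]
  exact h V ⟨hVc1, hVN, hVu⟩

variable {E₁ E₂ : Type*} [NormedAddCommGroup E₁] [InnerProductSpace ℝ E₁]
  [FiniteDimensional ℝ E₁] [MeasurableSpace E₁] [BorelSpace E₁] [Nontrivial E₁]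
  [NormedAddCommGroup E₂] [InnerProductSpace ℝ E₂] [FiniteDimensional ℝ E₂] [MeasurableSpace E₂]
  [BorelSpace E₂] {L : WithLp 2 (E₁ × E₂) ≃ₗᵢ[ℝ] EuclideanSpace ℝ (Fin n)}
  {W : Set (EuclideanSpace ℝ (Fin ν))} {ρ : EuclideanSpace ℝ (Fin ν) → EuclideanSpace ℝ (Fin ν)}
  {b : N} {f : C(E₁, N)} {e : E₁}

lemma IsSmoothRetractionOn.exists_mul_log_le_extEnergy_bubble (hρ : IsSmoothRetractionOn ρ W N)
    (hbW : (b : EuclideanSpace ℝ (Fin ν)) ∈ W) (hp : p = finrank ℝ E₁ + 1)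
    (hfb : ∀ x, 1 ≤ ‖x‖ → f x = b) (hf : ¬ f.HomotopicRel (.const E₁ b) {x | 1 ≤ ‖x‖}) :
    ∃ k : ℝ≥0∞, k ≠ 0 ∧ ∀ (c : E₁) (ε : ℝ), ‖c‖ ≤ 1 / 8 → 0 < ε → ε < 1 / 16 →
      k * ENNReal.ofReal (Real.log (1 / 8 / (2 * ε))) ≤
        extEnergy p N (bubble L (fun x => (f x : EuclideanSpace ℝ (Fin ν))) e c ε) := by
  obtain ⟨δ, hδ, hδW⟩ := Metric.isOpen_iff.1 hρ.isOpen _ hbW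
  have hp₀ : 0 ≤ p := by rw [hp]; positivity
  have hconst : morreyConst (volume : Measure E₁) p ≠ ⊤ := morreyConst_ne_top (by linarith)
  refine ⟨ENNReal.ofReal δ ^ p * volume (ball (0 : E₂) (1 / 8)) /
    morreyConst (volume : Measure E₁) p, ?_, fun c ε hc hε hε_lt => le_extEnergy hp₀ fun V hV => ?_⟩
  · simp [ENNReal.div_eq_zero_iff, hconst, hδ, (measure_ball_pos volume _ _).ne']
  have hnorm : ∀ y ∈ ball (0 : E₂) (1 / 8), ∀ x ∈ closedBall (0 : E₁) (1 / 8),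
      ‖L (toLp 2 (c + x, y))‖ < 1 / 2 := fun y hy x hx => by
    rw [mem_ball_zero_iff] at hy
    rw [mem_closedBall_zero_iff] at hx
    linarith [norm_map_toLp_le L (c + x) y, norm_add_le c x]
  have hle := hρ.rpow_mul_log_mul_volume_le_lintegral
    (f := f.comp ⟨fun x => ε⁻¹ • x, by fun_prop⟩) (ρ₀ := 1 / 8) hp hδ hδW hε
    (fun x hx => hfb _ (one_le_norm_inv_smul hε hx))
    (fun h => hf (homotopicRel_const_of_comp_smul hε (by simpa using h)))
    (by linarith) (by norm_num) L measurableSet_ball measurableSet_ball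
    (fun y hy x hx => mem_ball_zero_iff.2 <| by linarith [hnorm y hy x hx])
    (fun y hy x hx => by
      rw [bubble_of_norm_le (hnorm y hy x hx).le, L.symm_apply_apply, WithLp.toLp_fst,
        add_sub_cancel_left]
      rfl)
    (hV.mono ball_subset_closedBall)
  calc _ = ENNReal.ofReal δ ^ p * ENNReal.ofReal (Real.log (1 / 8 / (2 * ε))) *
          volume (ball (0 : E₂) (1 / 8)) / morreyConst (volume : Measure E₁) p := by
        simp only [div_eq_mul_inv]
        ring
    _ ≤ _ := ENNReal.div_le_of_le_mul' hle

lemma tendsto_mul_ofReal_log_div {k : ℝ≥0∞} (hk : k ≠ 0) {r : ℝ} (hr : 0 < r) :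
    Tendsto (fun ε => k * ENNReal.ofReal (Real.log (r / (2 * ε)))) (𝓝[>] 0) (𝓝 ⊤) := by
  have hdiv : Tendsto (fun ε : ℝ => r / (2 * ε)) (𝓝[>] 0) atTop := by
    simpa only [div_eq_mul_inv, mul_inv, ← mul_assoc] using
      tendsto_inv_nhdsGT_zero.const_mul_atTop (by positivity : 0 < r * 2⁻¹)
  have hlog : Tendsto (fun ε : ℝ => ENNReal.ofReal (Real.log (r / (2 * ε)))) (𝓝[>] 0) (𝓝 ⊤) :=
    ENNReal.tendsto_ofReal_nhds_top.2 (Real.tendsto_log_atTop.comp hdiv)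
  simpa only [ENNReal.mul_top hk] using
    ENNReal.Tendsto.const_mul (a := k) hlog (.inl ENNReal.top_ne_zero)

lemma IsSmoothRetractionOn.exists_energy_bubble_mem_Icc (hρ : IsSmoothRetractionOn ρ W N)
    (hN : IsCompact N) (hNW : N ⊆ W) {s : ℝ} (hp : p = finrank ℝ E₁ + 1) (hs : s * p = finrank ℝ E₁)
    (hf_smooth : ContDiff ℝ 1 fun x => (f x : EuclideanSpace ℝ (Fin ν)))
    (hfb : ∀ x, 1 ≤ ‖x‖ → f x = b) (hf : ¬ f.HomotopicRel (.const E₁ b) {x | 1 ≤ ‖x‖}) :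
    ∃ (c : ℝ → E₁) (k C : ℝ≥0∞), k ≠ 0 ∧ C ≠ ⊤ ∧
      (∀ ε ∈ Ioo (0 : ℝ) (1 / 16), ‖c ε‖ ≤ 1 / 8 ∧
        gagliardoE s p (ball 0 1) (bubble L (fun x => (f x : EuclideanSpace ℝ (Fin ν))) e (c ε) ε) ∈
          Icc k C) ∧
      Tendsto (fun ε => extEnergy p N
        (bubble L (fun x => (f x : EuclideanSpace ℝ (Fin ν))) e (c ε) ε)) (𝓝[>] 0) (𝓝 ⊤) := by
  have hp_lt : finrank ℝ E₁ < p := by linarith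
  have hp₀ : 0 ≤ p := (Nat.cast_nonneg _).trans hp_lt.le
  have hfb' : ∀ x, 1 ≤ ‖x‖ → (f x : EuclideanSpace ℝ (Fin ν)) = b := fun x hx => by rw [hfb x hx]
  have hf_ne : ∃ x, (f x : EuclideanSpace ℝ (Fin ν)) ≠ b := by
    by_contra! hconst
    have hf_const : f = .const E₁ b := ContinuousMap.ext fun x => Subtype.ext (hconst x)
    exact hf (hf_const ▸ .refl _)
  have hdiam : ∀ x y, ‖(f y : EuclideanSpace ℝ (Fin ν)) - f x‖ ≤ diam N := fun x y => by
    rw [← dist_eq_norm]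
    exact dist_le_diam_of_mem hN.isBounded (f y).2 (f x).2
  obtain ⟨C, hC, hbubble⟩ := exists_gagliardoE_bubble_le (L := L) (e := e) hs hp_lt hf_smooth hfb'
    hdiam (by norm_num : (0 : ℝ) < 1 / 8)
  obtain ⟨k, hk, hk_le⟩ :=
    exists_le_gagliardoE_bubble (L := L) (e := e) hp₀ hs hf_smooth.continuous hfb' hf_ne
  obtain ⟨k', hk', hk'_le⟩ :=
    hρ.exists_mul_log_le_extEnergy_bubble (L := L) (e := e) (hNW b.2) hp hfb hf
  choose! c hc hcC using hbubble
  have hc_le : ∀ ε > 0, ‖c ε‖ ≤ 1 / 8 := fun ε hε => (mem_ball_zero_iff.1 (hc ε hε)).le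
  refine ⟨c, k, C, hk, hC, fun ε hε => ⟨hc_le ε hε.1,
    hk_le _ _ (hc_le ε hε.1) hε.1 hε.2.le, hcC ε hε.1⟩, ?_⟩
  refine tendsto_nhds_top_mono (tendsto_mul_ofReal_log_div hk' (by norm_num : (0 : ℝ) < 1 / 8)) ?_
  filter_upwards [Ioo_mem_nhdsGT (by norm_num : (0 : ℝ) < 1 / 16)] with ε hε
  exact hk'_le _ _ (hc_le ε hε.1) hε.1 hε.2

end Extension

lemma nonempty_withLp_prod_linearIsometryEquiv {l n : ℕ} (hln : l ≤ n) :
    Nonempty (WithLp 2 (EuclideanSpace ℝ (Fin l) × EuclideanSpace ℝ (Fin (n - l))) ≃ₗᵢ[ℝ]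
      EuclideanSpace ℝ (Fin n)) :=
  exists_linearIsometryEquiv_of_finrank_eq <| by
    rw [(WithLp.linearEquiv 2 ℝ _).finrank_eq, Module.finrank_prod]
    simp [hln]

theorem statement1_general {ν n l : ℕ} {N W : Set (EuclideanSpace ℝ (Fin ν))}
    {ρ : EuclideanSpace ℝ (Fin ν) → EuclideanSpace ℝ (Fin ν)} (hN : IsCompact N) (hNW : N ⊆ W)
    (hρ : IsSmoothRetractionOn ρ W N) {b : EuclideanSpace ℝ (Fin ν)} (hb : b ∈ N) (hl : 1 ≤ l)
    (hln : l ≤ n) {p : ℝ} (hp : p = (l : ℝ) + 1)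
    (hπ : Nontrivial (HomotopyGroup (Fin l) N ⟨b, hb⟩)) :
    ∃ u : ℕ → EuclideanSpace ℝ (Fin n) → EuclideanSpace ℝ (Fin ν),
      (∀ j, SmoothOnNhd (u j) (closedBall 0 1)) ∧
      (∀ j, MapsTo (u j) (closedBall 0 1) N) ∧
      (∀ j, ∀ x ∈ sphere (0 : EuclideanSpace ℝ (Fin n)) 1, u j x = b) ∧
      0 < atTop.liminf (fun j => gagliardoE (1 - 1 / p) p (ball 0 1) (u j)) ∧
      (∀ M : ℝ, 0 < M → ∃ J : ℕ, ∀ j, J ≤ j →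
        ENNReal.ofReal M * gagliardoE (1 - 1 / p) p (ball 0 1) (u j) ≤ extEnergy p N (u j)) := by
  have : Nonempty (Fin l) := ⟨⟨0, hl⟩⟩
  have hs : (1 - 1 / p) * p = l := by
    rw [sub_mul, one_div_mul_cancel (by linarith [l.cast_nonneg (α := ℝ)]), hp]
    ring
  obtain ⟨f, hf_smooth, hfb, hf⟩ :=
    hρ.exists_contDiff_not_homotopicRel_const hN hNW (EuclideanSpace.equiv (Fin l) ℝ) hπ
  obtain ⟨L⟩ := nonempty_withLp_prod_linearIsometryEquiv hln
  obtain ⟨e, he⟩ := exists_norm_eq (EuclideanSpace ℝ (Fin l)) zero_le_one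
  obtain ⟨c, k, C, hk, hC, henergy, hext⟩ := hρ.exists_energy_bubble_mem_Icc (L := L) (e := e)
    (s := 1 - 1 / p) hN hNW (by simpa using hp) (by rw [hs, finrank_euclideanSpace_fin])
    (hf_smooth.of_le (by simp)) hfb hf
  obtain ⟨ε, -, hε, hε_tendsto⟩ := exists_seq_strictAnti_tendsto' (by norm_num : (0 : ℝ) < 1 / 16)
  refine ⟨fun j => bubble L (fun x => (f x : EuclideanSpace ℝ (Fin ν))) e (c (ε j)) (ε j),
    fun j => ⟨univ, isOpen_univ, subset_univ _, (contDiff_bubble hf_smooth).contDiffOn⟩,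
    fun j x _ => (f _).2, fun j x hx => ?_, ?_, fun M _ => ?_⟩
  · exact bubble_of_le_norm (fun y hy => by rw [hfb y hy]) (hε j).1
      (by linarith [(henergy _ (hε j)).1, (hε j).2])
      (by rw [mem_sphere_zero_iff_norm.1 hx]; norm_num)
  · exact (pos_iff_ne_zero.2 hk).trans_le
      (le_liminf_of_le (by isBoundedDefault) (.of_forall fun j => (henergy _ (hε j)).2.1))
  · have hε_pos : Tendsto ε atTop (𝓝[>] 0) :=
      tendsto_nhdsWithin_iff.2 ⟨hε_tendsto, .of_forall fun j => (hε j).1⟩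
    obtain ⟨J, hJ⟩ := eventually_atTop.1 <| (hext.comp hε_pos).eventually <|
      lt_mem_nhds (ENNReal.mul_lt_top ENNReal.ofReal_lt_top hC.lt_top (a := ENNReal.ofReal M))
    exact ⟨J, fun j hj => (mul_le_mul_right (henergy _ (hε j)).2.2 _).trans (hJ j hj).le⟩

/-- critical case `p = ℓ + 1`.  If `π_ℓ(N, b)` is nontrivial, there is a sequence
of smooth maps `u_j : B̄^{m-1} → N`, equal to `b` on `S^{m-2}`, whose fractional energies stay
bounded away from `0` while the ratio `E^{1,p}_ext(u_j) / E^{1-1/p,p}(u_j)` tends to `∞`. -/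
theorem statement1 (ν : ℕ) (hν : 1 ≤ ν) (N : Set (EuclideanSpace ℝ (Fin ν)))
    (hNcpt : IsCompact N) (hNconn : IsConnected N) (hNsub : IsSmoothSubmanifold N)
    (b : EuclideanSpace ℝ (Fin ν)) (hb : b ∈ N)
    (m : ℕ) (hm : 2 ≤ m) (l : ℕ) (hl : 1 ≤ l) (hlm : l ≤ m - 1)
    (p : ℝ) (hp : p = (l : ℝ) + 1)
    (hπ : Nontrivial (HomotopyGroup (Fin l) ↥N ⟨b, hb⟩)) :
    ∃ u : ℕ → EuclideanSpace ℝ (Fin (m - 1)) → EuclideanSpace ℝ (Fin ν),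
      (∀ j, SmoothOnNhd (u j) (closedBall 0 1)) ∧
      (∀ j, MapsTo (u j) (closedBall 0 1) N) ∧
      (∀ j, ∀ x ∈ sphere (0 : EuclideanSpace ℝ (Fin (m - 1))) 1, u j x = b) ∧
      0 < Filter.atTop.liminf (fun j => gagliardoE (1 - 1 / p) p (ball 0 1) (u j)) ∧
      (∀ M : ℝ, 0 < M → ∃ J : ℕ, ∀ j, J ≤ j →
        ENNReal.ofReal M * gagliardoE (1 - 1 / p) p (ball 0 1) (u j)
          ≤ extEnergy p N (u j)) := by
  obtain ⟨W, ρ, hNW, hρ⟩ :=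
    exists_isSmoothRetractionOn_of_isCompact hNcpt fun x hx => hNsub.exists_isSmoothRetractionOn hx
  exact statement1_general hNcpt hNW hρ hb hl hlm hp hπ

end
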